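/- arXiv:1508.00099 — 4 statements merged into one kernel-verified Lean document; each statement's English description precedes it below -/
import Mathlib

section
/- Let B^H be a fractional Brownian motion with Hurst parameter H ∈ (0,1), and suppose that E[exp((max_{0≤t≤1}(B^H_t − t·B^H_1))²)] < ∞. Set a(H) := ln E[exp((max_{0≤t≤1}(B^H_t − t·B^H_1))²)]. Then for every integer n ≥ 1, Δ_n(B^H) := E[max_{0≤t≤1} B^H_t] − E[max_{0≤i≤n} B^H_{i/n}] ≤ n^{−H}·√(a(H) + ln n). -/
open MeasureTheory ProbabilityTheory Real Set Filter Topology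

noncomputable section

/-- `X` is a centered Gaussian process on the time set `S`: every finite linear
combination `∑ i, c i * X (ts i)` of its values at times in `S` is a centered
Gaussian random variable. -/
def IsCenteredGaussianOn {Ω : Type} [MeasurableSpace Ω] (μ : Measure Ω)
    (X : ℝ → Ω → ℝ) (S : Set ℝ) : Prop :=
  (∀ t ∈ S, Measurable (X t)) ∧
  ∀ (k : ℕ) (c : Fin k → ℝ) (ts : Fin k → ℝ), (∀ i, ts i ∈ S) →
    ∃ v : NNReal, μ.map (fun ω => ∑ i, c i * X (ts i) ω) = gaussianReal 0 v

/-- The `L²`-norm `‖Y‖₂ = (E Y²)^{1/2}` of a real random variable. -/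
def l2norm {Ω : Type} [MeasurableSpace Ω] (μ : Measure Ω) (Y : Ω → ℝ) : ℝ :=
  Real.sqrt (∫ ω, (Y ω) ^ 2 ∂μ)

/-- The expected supremum `E [sup_{0 ≤ t ≤ 1} X_t]`. -/
def expMax {Ω : Type} [MeasurableSpace Ω] (μ : Measure Ω) (X : ℝ → Ω → ℝ) : ℝ :=
  ∫ ω, (⨆ t : Icc (0:ℝ) 1, X t.1 ω) ∂μ

/-- The expected maximum over the grid: `E [max_{0 ≤ i ≤ n} X_{i/n}]`. -/
def expMaxGrid {Ω : Type} [MeasurableSpace Ω] (μ : Measure Ω) (X : ℝ → Ω → ℝ) (n : ℕ) : ℝ :=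
  ∫ ω, (⨆ i : Fin (n + 1), X (((i : ℕ) : ℝ) / (n : ℝ)) ω) ∂μ

/-- `B` is a fractional Brownian motion with Hurst parameter `H`: a centered Gaussian
process on `[0,∞)` with a.s. continuous sample paths, `B 0 = 0`, and covariance
`E[B_s B_t] = (s^{2H} + t^{2H} - |t-s|^{2H}) / 2`. -/
def IsFBM {Ω : Type} [MeasurableSpace Ω] (μ : Measure Ω) (H : ℝ) (B : ℝ → Ω → ℝ) : Prop :=
  IsCenteredGaussianOn μ B (Ici 0) ∧
  (∀ᵐ ω ∂μ, ContinuousOn (fun t => B t ω) (Ici 0)) ∧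
  (∀ᵐ ω ∂μ, B 0 ω = 0) ∧
  ∀ s t : ℝ, 0 ≤ s → 0 ≤ t →
    ∫ ω, B s ω * B t ω ∂μ = (s ^ (2 * H) + t ^ (2 * H) - |t - s| ^ (2 * H)) / 2

/-- Two families of centered Gaussian variables with jointly Gaussian linear combinations and the
same second moments have the same law. -/
lemma identDistrib_of_gaussian_of_integral_mul_eq {Ω ι : Type} [MeasurableSpace Ω]
    {μ : Measure Ω} [IsProbabilityMeasure μ] {X Y : ι → Ω → ℝ}
    (hXm : ∀ k, Measurable (X k)) (hYm : ∀ k, Measurable (Y k))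
    (hX2 : ∀ k, MemLp (X k) 2 μ) (hY2 : ∀ k, MemLp (Y k) 2 μ)
    (hX : ∀ (I : Finset ι) (c : I → ℝ),
      ∃ v : NNReal, μ.map (fun ω => ∑ k, c k * X k ω) = gaussianReal 0 v)
    (hY : ∀ (I : Finset ι) (c : I → ℝ),
      ∃ v : NNReal, μ.map (fun ω => ∑ k, c k * Y k ω) = gaussianReal 0 v)
    (hcov : ∀ k l, ∫ ω, X k ω * X l ω ∂μ = ∫ ω, Y k ω * Y l ω ∂μ) :
    IdentDistrib (fun ω k => X k ω) (fun ω k => Y k ω) μ μ := by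
  have var_eq : ∀ {Z : ι → Ω → ℝ}, (∀ k, Measurable (Z k)) → (∀ k, MemLp (Z k) 2 μ) →
      ∀ (I : Finset ι) (c : I → ℝ) (v : NNReal),
        μ.map (fun ω => ∑ k, c k * Z k ω) = gaussianReal 0 v →
        (v : ℝ) = ∑ k, ∑ l, c k * c l * ∫ ω, Z k ω * Z l ω ∂μ := by
    intro Z hZm hZ2 I c v hv
    have h1 : (v : ℝ) = ∫ x, x ^ 2 ∂(gaussianReal 0 v) := by
      have h := variance_id_gaussianReal (μ := 0) (v := v)
      rw [variance_of_integral_eq_zero aemeasurable_id (by simp)] at h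
      simpa using h.symm
    have hint : ∀ k l : I, Integrable (fun ω => Z k ω * Z l ω) μ :=
      fun k l => (hZ2 k).integrable_mul (hZ2 l)
    rw [h1, ← hv, integral_map (by fun_prop) (by fun_prop)]
    have h2 : ∀ ω, (∑ k, c k * Z k ω) ^ 2 = ∑ k, ∑ l, c k * c l * (Z k ω * Z l ω) := by
      intro ω
      rw [sq, Finset.sum_mul_sum]
      exact Finset.sum_congr rfl fun k _ => Finset.sum_congr rfl fun l _ => by ring
    simp_rw [h2]
    rw [integral_finsetSum _ fun k _ => integrable_finsetSum _ fun l _ => (hint k l).const_mul _]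
    refine Finset.sum_congr rfl fun k _ => ?_
    rw [integral_finsetSum _ fun l _ => (hint k l).const_mul _]
    exact Finset.sum_congr rfl fun l _ => integral_const_mul _ _
  have hXa : Measurable (fun ω k => X k ω) := measurable_pi_lambda _ hXm
  have hYa : Measurable (fun ω k => Y k ω) := measurable_pi_lambda _ hYm
  refine ⟨hXa.aemeasurable, hYa.aemeasurable, ?_⟩
  rw [map_eq_iff_forall_finset_map_restrict_eq hXa.aemeasurable hYa.aemeasurable]
  intro I
  have hXI : Measurable (fun ω => I.restrict (X · ω)) := by fun_prop
  have hYI : Measurable (fun ω => I.restrict (Y · ω)) := by fun_prop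
  have := Measure.isProbabilityMeasure_map (μ := μ) hXI.aemeasurable
  have := Measure.isProbabilityMeasure_map (μ := μ) hYI.aemeasurable
  refine Measure.ext_of_charFunDual <| funext fun L => ?_
  rw [charFunDual_eq_charFun_map_one, charFunDual_eq_charFun_map_one,
    Measure.map_map (by fun_prop) hXI, Measure.map_map (by fun_prop) hYI]
  classical
  have hL : ∀ Z : ι → Ω → ℝ, L ∘ (fun ω => I.restrict (Z · ω)) =
      fun ω => ∑ k, L (Pi.single k 1) * Z k ω := by
    intro Z
    ext ω
    rw [Function.comp_apply, ← ContinuousLinearMap.coe_coe, LinearMap.pi_apply_eq_sum_univ]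
    refine Finset.sum_congr rfl fun k _ => ?_
    simp only [Finset.restrict, smul_eq_mul, ContinuousLinearMap.coe_coe]
    rw [mul_comm]
    congr 2
    ext j
    simp [Pi.single_apply, eq_comm]
  rw [hL, hL]
  obtain ⟨v, hv⟩ := hX I fun k => L (Pi.single k 1)
  obtain ⟨w, hw⟩ := hY I fun k => L (Pi.single k 1)
  have hvw : v = w := by
    refine NNReal.coe_injective ?_
    rw [var_eq hXm hX2 I _ v hv, var_eq hYm hY2 I _ w hw]
    simp_rw [hcov]
  rw [hv, hw, hvw]

/-- The rescaled bridge of `X` over the interval `[a, a + h]`, at relative time `s`. -/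
def scaledBridge {Ω : Type} (H : ℝ) (X : ℝ → Ω → ℝ) (a h s : ℝ) (ω : Ω) : ℝ :=
  h ^ (-H) * (X (a + h * s) ω - (1 - s) * X a ω - s * X (a + h) ω)

/-- The sample times entering `scaledBridge`. -/
def bridgeTime (a h s : ℝ) : Fin 3 → ℝ := ![a + h * s, a, a + h]

/-- The coefficients entering `scaledBridge`. -/
def bridgeCoeff (H h s : ℝ) : Fin 3 → ℝ := ![h ^ (-H), -(h ^ (-H) * (1 - s)), -(h ^ (-H) * s)]

lemma scaledBridge_eq_sum {Ω : Type} (H : ℝ) (X : ℝ → Ω → ℝ) (a h s : ℝ) (ω : Ω) :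
    scaledBridge H X a h s ω = ∑ j, bridgeCoeff H h s j * X (bridgeTime a h s j) ω := by
  simp [scaledBridge, bridgeCoeff, bridgeTime, Fin.sum_univ_three]
  ring

lemma bridgeTime_nonneg {a h s : ℝ} (ha : 0 ≤ a) (hh : 0 < h) (hs : 0 ≤ s) (j : Fin 3) :
    bridgeTime a h s j ∈ Ici (0 : ℝ) := by
  fin_cases j <;> simp [bridgeTime] <;> positivity

section Gaussian

variable {Ω : Type} [MeasurableSpace Ω] {μ : Measure Ω} {X : ℝ → Ω → ℝ} {S : Set ℝ}

lemma IsCenteredGaussianOn.exists_map_sum_eq (hX : IsCenteredGaussianOn μ X S) {κ : Type}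
    [Fintype κ] (c ts : κ → ℝ) (hts : ∀ i, ts i ∈ S) :
    ∃ v : NNReal, μ.map (fun ω => ∑ i, c i * X (ts i) ω) = gaussianReal 0 v := by
  let e := (Fintype.equivFin κ).symm
  obtain ⟨v, hv⟩ := hX.2 _ (c ∘ e) (ts ∘ e) fun i => hts _
  refine ⟨v, ?_⟩
  rw [← hv]
  congr 1
  ext ω
  exact (e.sum_comp fun i => c i * X (ts i) ω).symm

lemma IsCenteredGaussianOn.memLp_two (hX : IsCenteredGaussianOn μ X S) {t : ℝ} (ht : t ∈ S) :
    MemLp (X t) 2 μ := by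
  obtain ⟨v, hv⟩ := hX.2 1 (fun _ => 1) (fun _ => t) fun _ => ht
  have h : μ.map (X t) = gaussianReal 0 v := by simpa using hv
  have h2 : MemLp id 2 (μ.map (X t)) := h ▸ memLp_id_gaussianReal 2
  exact (memLp_map_measure_iff (by fun_prop) (hX.1 t ht).aemeasurable).1 h2

end Gaussian

section FBM

variable {Ω : Type} [MeasurableSpace Ω] {μ : Measure Ω} {H : ℝ} {B : ℝ → Ω → ℝ} {a h : ℝ}

lemma IsFBM.measurable_scaledBridge (hB : IsFBM μ H B) (ha : 0 ≤ a) (hh : 0 < h) {s : ℝ}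
    (hs : 0 ≤ s) : Measurable (scaledBridge H B a h s) := by
  have h1 := hB.1.1 (a + h * s) (mem_Ici.2 (by positivity))
  have h2 := hB.1.1 a (mem_Ici.2 (by positivity))
  have h3 := hB.1.1 (a + h) (mem_Ici.2 (by positivity))
  unfold scaledBridge
  fun_prop

lemma IsFBM.memLp_scaledBridge (hB : IsFBM μ H B) (ha : 0 ≤ a) (hh : 0 < h) {s : ℝ}
    (hs : 0 ≤ s) : MemLp (scaledBridge H B a h s) 2 μ := by
  have h1 := hB.1.memLp_two (t := a + h * s) (mem_Ici.2 (by positivity))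
  have h2 := hB.1.memLp_two (t := a) (mem_Ici.2 (by positivity))
  have h3 := hB.1.memLp_two (t := a + h) (mem_Ici.2 (by positivity))
  exact ((h1.sub (h2.const_mul _)).sub (h3.const_mul _)).const_mul _

lemma IsFBM.integral_scaledBridge_mul (hB : IsFBM μ H B) (hH : 0 < H) (ha : 0 ≤ a) (hh : 0 < h)
    {s t : ℝ} (hs : s ∈ Icc (0 : ℝ) 1) (ht : t ∈ Icc (0 : ℝ) 1) :
    ∫ ω, scaledBridge H B a h s ω * scaledBridge H B a h t ω ∂μ =
      ((1 - t) * s ^ (2 * H) + t * (1 - s) ^ (2 * H) + (1 - s) * t ^ (2 * H)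
        + s * (1 - t) ^ (2 * H) - (1 - s) * t - s * (1 - t) - |t - s| ^ (2 * H)) / 2 := by
  have hint : ∀ i j, Integrable
      (fun ω => B (bridgeTime a h s i) ω * B (bridgeTime a h t j) ω) μ := fun i j =>
    (hB.1.memLp_two (bridgeTime_nonneg ha hh hs.1 i)).integrable_mul
      (hB.1.memLp_two (bridgeTime_nonneg ha hh ht.1 j))
  have hexp : ∀ ω, scaledBridge H B a h s ω * scaledBridge H B a h t ω =
      ∑ i, ∑ j, bridgeCoeff H h s i * bridgeCoeff H h t j *
        (B (bridgeTime a h s i) ω * B (bridgeTime a h t j) ω) := by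
    intro ω
    rw [scaledBridge_eq_sum, scaledBridge_eq_sum, Finset.sum_mul_sum]
    exact Finset.sum_congr rfl fun k _ => Finset.sum_congr rfl fun l _ => by ring
  simp_rw [hexp]
  rw [integral_finsetSum _ fun i _ => integrable_finsetSum _ fun j _ => (hint i j).const_mul _]
  simp_rw [integral_finsetSum _ fun j _ => (hint _ j).const_mul _, integral_const_mul,
    hB.2.2.2 _ _ (bridgeTime_nonneg ha hh hs.1 _) (bridgeTime_nonneg ha hh ht.1 _)]
  have hscale : ∀ x y r : ℝ, y - x = h * r → |y - x| ^ (2 * H) = h ^ (2 * H) * |r| ^ (2 * H) := by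
    intro x y r hr
    rw [hr, abs_mul, abs_of_pos hh, Real.mul_rpow hh.le (abs_nonneg _)]
  have hz : |(0 : ℝ)| ^ (2 * H) = 0 := by
    rw [abs_zero, Real.zero_rpow (by positivity)]
  have h1 : h ^ (-H) * h ^ (-H) * h ^ (2 * H) = 1 := by
    rw [← Real.rpow_add hh, ← Real.rpow_add hh]
    ring_nf
    exact Real.rpow_zero _
  have e11 := hscale (a + h * s) (a + h * t) (t - s) (by ring)
  have e12 := hscale (a + h * s) a (-s) (by ring)
  have e13 := hscale (a + h * s) (a + h) (1 - s) (by ring)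
  have e21 := hscale a (a + h * t) t (by ring)
  have e22 := hscale a a 0 (by ring)
  have e23 := hscale a (a + h) 1 (by ring)
  have e31 := hscale (a + h) (a + h * t) (-(1 - t)) (by ring)
  have e32 := hscale (a + h) a (-1) (by ring)
  have e33 := hscale (a + h) (a + h) 0 (by ring)
  rw [hz] at e22 e33
  rw [abs_neg, abs_of_nonneg hs.1] at e12
  rw [abs_of_nonneg (sub_nonneg.2 hs.2)] at e13
  rw [abs_of_nonneg ht.1] at e21
  rw [abs_one, Real.one_rpow] at e23
  rw [abs_neg, abs_of_nonneg (sub_nonneg.2 ht.2)] at e31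
  rw [abs_neg, abs_one, Real.one_rpow] at e32
  simp only [bridgeCoeff, bridgeTime, Fin.sum_univ_three, Matrix.cons_val_zero,
    Matrix.cons_val_one, Matrix.cons_val]
  rw [e11, e12, e13, e21, e22, e23, e31, e32, e33]
  linear_combination (((1 - t) * s ^ (2 * H) + t * (1 - s) ^ (2 * H) + (1 - s) * t ^ (2 * H)
        + s * (1 - t) ^ (2 * H) - (1 - s) * t - s * (1 - t) - |t - s| ^ (2 * H)) / 2) * h1

/-- Self-similarity and stationarity of increments: all rescaled bridges have the same law. -/
lemma IsFBM.identDistrib_scaledBridge [IsProbabilityMeasure μ] (hB : IsFBM μ H B) (hH : 0 < H)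
    (ha : 0 ≤ a) (hh : 0 < h) {b k : ℝ} (hb : 0 ≤ b) (hk : 0 < k) :
    IdentDistrib (fun ω (s : Icc (0 : ℝ) 1) => scaledBridge H B a h s ω)
      (fun ω (s : Icc (0 : ℝ) 1) => scaledBridge H B b k s ω) μ μ := by
  have gauss : ∀ {a h : ℝ}, 0 ≤ a → 0 < h → ∀ (I : Finset (Icc (0 : ℝ) 1)) (c : I → ℝ),
      ∃ v : NNReal, μ.map (fun ω => ∑ s, c s * scaledBridge H B a h s ω) = gaussianReal 0 v := by
    intro a h ha hh I c
    obtain ⟨v, hv⟩ := hB.1.exists_map_sum_eq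
      (fun p : I × Fin 3 => c p.1 * bridgeCoeff H h p.1 p.2)
      (fun p : I × Fin 3 => bridgeTime a h p.1 p.2)
      (fun p => bridgeTime_nonneg ha hh p.1.1.2.1 p.2)
    refine ⟨v, ?_⟩
    rw [← hv]
    congr 1
    ext ω
    rw [Fintype.sum_prod_type]
    refine Finset.sum_congr rfl fun s _ => ?_
    rw [scaledBridge_eq_sum, Finset.mul_sum]
    exact Finset.sum_congr rfl fun j _ => by ring
  refine identDistrib_of_gaussian_of_integral_mul_eq
    (fun s => hB.measurable_scaledBridge ha hh s.2.1)
    (fun s => hB.measurable_scaledBridge hb hk s.2.1)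
    (fun s => hB.memLp_scaledBridge ha hh s.2.1)
    (fun s => hB.memLp_scaledBridge hb hk s.2.1)
    (gauss ha hh) (gauss hb hk) fun s t => ?_
  rw [hB.integral_scaledBridge_mul hH ha hh s.2 t.2, hB.integral_scaledBridge_mul hH hb hk s.2 t.2]

end FBM

/-- The supremum of a continuous function on `[0, 1]` is attained along a fixed sequence. -/
lemma iSup_unitInterval_eq_iSup_denseSeq {f : Icc (0 : ℝ) 1 → ℝ} (hf : Continuous f) :
    ⨆ t, f t = ⨆ k, f (TopologicalSpace.denseSeq (Icc (0 : ℝ) 1) k) := by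
  rw [← (TopologicalSpace.denseRange_denseSeq (Icc (0 : ℝ) 1)).ciSup' hf, iSup_range']

lemma continuous_scaledBridge {Ω : Type} {H a h : ℝ} {X : ℝ → Ω → ℝ} {ω : Ω}
    (hω : ContinuousOn (fun t => X t ω) (Ici 0)) (ha : 0 ≤ a) (hh : 0 < h) :
    Continuous fun s : Icc (0 : ℝ) 1 => scaledBridge H X a h s ω := by
  have h1 : Continuous fun s : Icc (0 : ℝ) 1 => X (a + h * s) ω :=
    hω.comp_continuous (by fun_prop) fun s => mem_Ici.2 (by have := s.2.1; positivity)
  exact continuous_const.mul ((h1.sub (by fun_prop)).sub (by fun_prop))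

lemma IsFBM.identDistrib_iSup_scaledBridge {Ω : Type} [MeasurableSpace Ω] {μ : Measure Ω}
    [IsProbabilityMeasure μ] {H : ℝ} {B : ℝ → Ω → ℝ} (hB : IsFBM μ H B) (hH : 0 < H)
    {a h b k : ℝ} (ha : 0 ≤ a) (hh : 0 < h) (hb : 0 ≤ b) (hk : 0 < k) :
    IdentDistrib (fun ω => ⨆ s : Icc (0 : ℝ) 1, scaledBridge H B a h s ω)
      (fun ω => ⨆ s : Icc (0 : ℝ) 1, scaledBridge H B b k s ω) μ μ := by
  let g : (Icc (0 : ℝ) 1 → ℝ) → ℝ := fun x => ⨆ k, x (TopologicalSpace.denseSeq (Icc (0 : ℝ) 1) k)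
  have hg : Measurable g := Measurable.iSup fun k => measurable_pi_apply _
  have key : ∀ {a h : ℝ}, 0 ≤ a → 0 < h →
      IdentDistrib (g ∘ fun ω (s : Icc (0 : ℝ) 1) => scaledBridge H B a h s ω)
        (fun ω => ⨆ s : Icc (0 : ℝ) 1, scaledBridge H B a h s ω) μ μ := by
    intro a h ha hh
    refine .of_ae_eq (hg.comp (measurable_pi_lambda _ fun s =>
      hB.measurable_scaledBridge ha hh s.2.1)).aemeasurable ?_
    filter_upwards [hB.2.1] with ω hω
    exact (iSup_unitInterval_eq_iSup_denseSeq (continuous_scaledBridge hω ha hh)).symm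
  exact ((key ha hh).symm.trans ((hB.identDistrib_scaledBridge hH ha hh hb hk).comp hg)).trans
    (key hb hk)

lemma integrable_and_integral_le_sqrt_log {Ω : Type} [MeasurableSpace Ω] {μ : Measure Ω}
    [IsProbabilityMeasure μ] {W : Ω → ℝ} {A : ℝ} (hW : AEStronglyMeasurable W μ)
    (hint : Integrable (fun ω => Real.exp (W ω ^ 2)) μ)
    (hA : ∫ ω, Real.exp (W ω ^ 2) ∂μ ≤ A) :
    Integrable W μ ∧ ∫ ω, W ω ∂μ ≤ √(Real.log A) := by
  have hsq : Integrable (fun ω => W ω ^ 2) μ := by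
    refine hint.mono' (hW.pow 2) (ae_of_all _ fun ω => ?_)
    rw [Real.norm_of_nonneg (sq_nonneg _)]
    linarith [Real.add_one_le_exp (W ω ^ 2)]
  have hLp : MemLp W 2 μ := (memLp_two_iff_integrable_sq hW).2 hsq
  refine ⟨hLp.integrable one_le_two, ?_⟩
  have hA1 : 1 ≤ A := by
    refine le_trans ?_ hA
    have h := integral_mono (integrable_const (1 : ℝ)) hint
      fun ω => Real.one_le_exp (sq_nonneg (W ω))
    simpa using h
  have hA0 : 0 < A := by linarith
  have hle : ∫ ω, A * (W ω ^ 2 + (1 - Real.log A)) ∂μ ≤ ∫ ω, Real.exp (W ω ^ 2) ∂μ := by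
    refine integral_mono ((hsq.add (integrable_const _)).const_mul A) hint fun ω => ?_
    have h := Real.add_one_le_exp (W ω ^ 2 - Real.log A)
    rw [Real.exp_sub, Real.exp_log hA0, le_div_iff₀ hA0] at h
    dsimp only
    linarith
  rw [integral_const_mul, integral_add hsq (integrable_const _)] at hle
  have hlog : ∫ ω, W ω ^ 2 ∂μ ≤ Real.log A := by
    simp only [integral_const, probReal_univ, smul_eq_mul, one_mul] at hle
    nlinarith
  have hvar := variance_nonneg W μ
  rw [variance_eq_sub hLp] at hvar
  refine Real.le_sqrt_of_sq_le ?_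
  simp only [Pi.pow_apply] at hvar
  linarith

/-- Every point of `[0, 1]` lies in a cell of the uniform grid of mesh `1 / n`. -/
lemma exists_grid_cell {n : ℕ} (hn : 1 ≤ n) {t : ℝ} (ht : t ∈ Icc (0 : ℝ) 1) :
    ∃ i : Fin n, ∃ s ∈ Icc (0 : ℝ) 1, t = (i : ℝ) / n + 1 / n * s := by
  have hn0 : (0 : ℝ) < n := by exact_mod_cast hn
  rcases ht.2.eq_or_lt with rfl | ht1
  · refine ⟨⟨n - 1, by omega⟩, 1, by simp, ?_⟩
    rw [Nat.cast_sub hn]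
    field_simp
    simp
  · have h0 : 0 ≤ n * t := mul_nonneg hn0.le ht.1
    have hlt : n * t < n := by nlinarith
    refine ⟨⟨⌊n * t⌋₊, (Nat.floor_lt h0).2 hlt⟩, n * t - ⌊n * t⌋₊,
      ⟨sub_nonneg.2 (Nat.floor_le h0), by linarith [Nat.lt_floor_add_one (n * t)]⟩, ?_⟩
    field_simp
    ring

lemma iSup_le_grid_add_iSup_scaledBridge {Ω : Type} {H : ℝ} {X : ℝ → Ω → ℝ} {ω : Ω}
    (hω : ContinuousOn (fun t => X t ω) (Ici 0)) {n : ℕ} (hn : 1 ≤ n) :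
    ⨆ t : Icc (0 : ℝ) 1, X t ω ≤ (⨆ i : Fin (n + 1), X ((i : ℕ) / (n : ℝ)) ω) +
      (n : ℝ) ^ (-H) *
        ⨆ i : Fin n, ⨆ s : Icc (0 : ℝ) 1, scaledBridge H X ((i : ℕ) / (n : ℝ)) (1 / n) s ω := by
  have hn0 : (0 : ℝ) < n := by exact_mod_cast hn
  refine ciSup_le fun t => ?_
  obtain ⟨i, s, hs, hts⟩ := exists_grid_cell hn t.2
  have hgrid : ∀ j : Fin (n + 1),
      X ((j : ℕ) / (n : ℝ)) ω ≤ ⨆ i : Fin (n + 1), X ((i : ℕ) / (n : ℝ)) ω :=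
    le_ciSup (f := fun i : Fin (n + 1) => X ((i : ℕ) / (n : ℝ)) ω) (Set.finite_range _).bddAbove
  have h1 := hgrid i.castSucc
  have h2 := hgrid i.succ
  rw [Fin.val_castSucc] at h1
  have hsucc : ((i.succ : ℕ) : ℝ) / n = (i : ℕ) / (n : ℝ) + 1 / n := by
    rw [Fin.val_succ]
    push_cast
    ring
  rw [hsucc] at h2
  have hbdd : BddAbove (Set.range fun s : Icc (0 : ℝ) 1 =>
      scaledBridge H X ((i : ℕ) / (n : ℝ)) (1 / n) s ω) :=
    (isCompact_range (continuous_scaledBridge hω (by positivity) (by positivity))).bddAbove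
  have h3 : scaledBridge H X ((i : ℕ) / (n : ℝ)) (1 / n) s ω ≤
      ⨆ i : Fin n, ⨆ s : Icc (0 : ℝ) 1, scaledBridge H X ((i : ℕ) / (n : ℝ)) (1 / n) s ω :=
    (le_ciSup hbdd ⟨s, hs⟩).trans (le_ciSup (f := fun i : Fin n => ⨆ s : Icc (0 : ℝ) 1,
      scaledBridge H X ((i : ℕ) / (n : ℝ)) (1 / n) s ω) (Set.finite_range _).bddAbove i)
  have h4 := mul_le_mul_of_nonneg_left h3 (Real.rpow_nonneg hn0.le (-H))
  have hcancel : (n : ℝ) ^ (-H) * (1 / n : ℝ) ^ (-H) = 1 := by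
    rw [← Real.mul_rpow hn0.le (by positivity), mul_one_div_cancel hn0.ne', Real.one_rpow]
  rw [scaledBridge, ← mul_assoc, hcancel, one_mul, ← hts] at h4
  have h5 := mul_le_mul_of_nonneg_left h1 (sub_nonneg.2 hs.2)
  have h6 := mul_le_mul_of_nonneg_left h2 hs.1
  linarith

/-- for a fractional Brownian motion `B^H` with
`a(H) := ln E[exp((max_{0≤t≤1}(B_t - t B_1))²)] < ∞`, the discrete-approximation error
satisfies `Δ_n(B^H) ≤ n^{-H} √(a(H) + ln n)` for all `n ≥ 1`. -/
theorem stmt4 {Ω : Type} [MeasurableSpace Ω] (μ : Measure Ω) [IsProbabilityMeasure μ]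
    (H : ℝ) (hH : H ∈ Ioo (0:ℝ) 1) (B : ℝ → Ω → ℝ) (hB : IsFBM μ H B)
    (hint : Integrable
      (fun ω => Real.exp ((⨆ t : Icc (0:ℝ) 1, (B t.1 ω - t.1 * B 1 ω)) ^ 2)) μ)
    (n : ℕ) (hn : 1 ≤ n) :
    expMax μ B - expMaxGrid μ B n ≤
      (n : ℝ) ^ (-H) *
        Real.sqrt
          (Real.log (∫ ω, Real.exp ((⨆ t : Icc (0:ℝ) 1, (B t.1 ω - t.1 * B 1 ω)) ^ 2) ∂μ)
            + Real.log n) := by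
  have hn0 : (0 : ℝ) < n := by exact_mod_cast hn
  have : Nonempty (Fin n) := ⟨⟨0, hn⟩⟩
  let Z : ℝ → ℝ → Ω → ℝ := fun a h ω => ⨆ s : Icc (0 : ℝ) 1, scaledBridge H B a h s ω
  let W : Ω → ℝ := fun ω => ⨆ i : Fin n, Z ((i : ℕ) / (n : ℝ)) (1 / n) ω
  let E := ∫ ω, Real.exp ((⨆ t : Icc (0:ℝ) 1, (B t.1 ω - t.1 * B 1 ω)) ^ 2) ∂μ
  have hZ0 : (fun ω => Real.exp ((⨆ t : Icc (0:ℝ) 1, (B t.1 ω - t.1 * B 1 ω)) ^ 2))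
      =ᵐ[μ] fun ω => Real.exp (Z 0 1 ω ^ 2) := by
    filter_upwards [hB.2.2.1] with ω hω
    simp [Z, scaledBridge, hω]
  have hident : ∀ i : Fin n, IdentDistrib (Z ((i : ℕ) / (n : ℝ)) (1 / n)) (Z 0 1) μ μ := fun i =>
    hB.identDistrib_iSup_scaledBridge hH.1 (by positivity) (by positivity) le_rfl one_pos
  have hidentExp : ∀ i : Fin n, IdentDistrib
      (fun ω => Real.exp (Z ((i : ℕ) / (n : ℝ)) (1 / n) ω ^ 2))
      (fun ω => Real.exp (Z 0 1 ω ^ 2)) μ μ := fun i =>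
    (hident i).comp (u := fun x => Real.exp (x ^ 2)) (by fun_prop)
  have hZint : ∀ i : Fin n,
      Integrable (fun ω => Real.exp (Z ((i : ℕ) / (n : ℝ)) (1 / n) ω ^ 2)) μ := fun i =>
    (hidentExp i).integrable_iff.2 (hint.congr hZ0)
  have hWm : AEMeasurable W μ := AEMeasurable.iSup fun i => (hident i).aemeasurable_fst
  have hWle : ∀ ω, Real.exp (W ω ^ 2) ≤
      ∑ i : Fin n, Real.exp (Z ((i : ℕ) / (n : ℝ)) (1 / n) ω ^ 2) := by
    intro ω
    obtain ⟨i, hi⟩ := exists_eq_ciSup_of_finite (f := fun i : Fin n =>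
      Z ((i : ℕ) / (n : ℝ)) (1 / n) ω)
    have h := Finset.single_le_sum (f := fun i : Fin n =>
      Real.exp (Z ((i : ℕ) / (n : ℝ)) (1 / n) ω ^ 2)) (fun j _ => (Real.exp_pos _).le)
      (Finset.mem_univ i)
    simp only [W, ← hi]
    exact h
  have hsum : Integrable
      (fun ω => ∑ i : Fin n, Real.exp (Z ((i : ℕ) / (n : ℝ)) (1 / n) ω ^ 2)) μ :=
    integrable_finsetSum _ fun i _ => hZint i
  have hWint : Integrable (fun ω => Real.exp (W ω ^ 2)) μ := by
    refine hsum.mono' (by fun_prop) (ae_of_all _ fun ω => ?_)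
    rw [Real.norm_of_nonneg (Real.exp_pos _).le]
    exact hWle ω
  have hWE : ∫ ω, Real.exp (W ω ^ 2) ∂μ ≤ E * n := by
    refine (integral_mono hWint hsum hWle).trans ?_
    rw [integral_finsetSum _ fun i _ => hZint i]
    simp_rw [fun i => (hidentExp i).integral_eq, ← integral_congr_ae hZ0]
    simp [E, mul_comm]
  obtain ⟨hWi, hWb⟩ := integrable_and_integral_le_sqrt_log hWm.aestronglyMeasurable hWint hWE
  have hE : 0 < E := integral_exp_pos hint
  rw [Real.log_mul hE.ne' hn0.ne'] at hWb
  have hGi : Integrable (fun ω => ⨆ i : Fin (n + 1), B (((i : ℕ) : ℝ) / (n : ℝ)) ω) μ := by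
    have hmem : ∀ i : Fin (n + 1), ((i : ℕ) : ℝ) / n ∈ Ici (0 : ℝ) := fun i =>
      mem_Ici.2 (by positivity)
    have hi : ∀ i : Fin (n + 1), Integrable (B (((i : ℕ) : ℝ) / n)) μ := fun i =>
      (hB.1.memLp_two (hmem i)).integrable one_le_two
    refine (integrable_finsetSum Finset.univ fun i _ => (hi i).abs).mono'
      (Measurable.iSup fun i => hB.1.1 _ (hmem i)).aestronglyMeasurable (ae_of_all _ fun ω => ?_)
    obtain ⟨i, hi⟩ := exists_eq_ciSup_of_finite (f := fun i : Fin (n + 1) =>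
      B (((i : ℕ) : ℝ) / n) ω)
    rw [← hi]
    exact Finset.single_le_sum (f := fun i : Fin (n + 1) => |B (((i : ℕ) : ℝ) / n) ω|)
      (fun j _ => abs_nonneg _) (Finset.mem_univ i)
  have hle : ∀ᵐ ω ∂μ, (⨆ t : Icc (0:ℝ) 1, B t.1 ω) ≤
      (⨆ i : Fin (n + 1), B (((i : ℕ) : ℝ) / (n : ℝ)) ω) + (n : ℝ) ^ (-H) * W ω := by
    filter_upwards [hB.2.1] with ω hω using iSup_le_grid_add_iSup_scaledBridge hω hn
  have hcont : ∀ ω, ContinuousOn (fun t => B t ω) (Ici 0) →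
      Continuous fun t : Icc (0 : ℝ) 1 => B t ω := fun ω hω =>
    hω.comp_continuous continuous_subtype_val fun t => t.2.1
  have hge : ∀ᵐ ω ∂μ, (⨆ i : Fin (n + 1), B (((i : ℕ) : ℝ) / (n : ℝ)) ω) ≤
      ⨆ t : Icc (0:ℝ) 1, B t.1 ω := by
    filter_upwards [hB.2.1] with ω hω
    refine ciSup_le fun i => ?_
    have hi : ((i : ℕ) : ℝ) / n ∈ Icc (0 : ℝ) 1 :=
      ⟨by positivity, (div_le_one hn0).2 (by exact_mod_cast Nat.lt_succ_iff.1 i.2)⟩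
    exact le_ciSup (f := fun t : Icc (0 : ℝ) 1 => B t ω)
      (isCompact_range (hcont ω hω)).bddAbove ⟨_, hi⟩
  have hMm : AEStronglyMeasurable (fun ω => ⨆ t : Icc (0:ℝ) 1, B t.1 ω) μ := by
    refine ⟨fun ω => ⨆ k, B (TopologicalSpace.denseSeq (Icc (0 : ℝ) 1) k) ω,
      (Measurable.iSup fun k => hB.1.1 _
        (TopologicalSpace.denseSeq (Icc (0 : ℝ) 1) k).2.1).stronglyMeasurable, ?_⟩
    filter_upwards [hB.2.1] with ω hω
    exact iSup_unitInterval_eq_iSup_denseSeq (hcont ω hω)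
  have hUi := hGi.add (hWi.const_mul ((n : ℝ) ^ (-H)))
  have hMi : Integrable (fun ω => ⨆ t : Icc (0:ℝ) 1, B t.1 ω) μ :=
    integrable_of_le_of_le hMm hge hle hGi hUi
  have hmono := integral_mono_ae hMi hUi hle
  simp only [Pi.add_apply] at hmono
  rw [integral_add hGi (hWi.const_mul _), integral_const_mul] at hmono
  have hfin := mul_le_mul_of_nonneg_left hWb (Real.rpow_nonneg hn0.le (-H))
  rw [expMax, expMaxGrid]
  linarith
end
end

section
/- For each H ∈ (0,1) let B^H be a fractional Brownian motion with Hurst parameter H. Fix finitely many times 0 ≤ t₁ < t₂ < ⋯ < t_k. Then, as H → 0⁺, the law of the random vector (B^H_{t₁}, …, B^H_{t_k}) converges weakly to the law of (Z_{t₁}, …, Z_{t_k}), where Z_t := (ξ_t − ξ_0)/√2 and (ξ_t)_{t≥0} is a family of independent standard normal random variables (in particular Z_0 = 0). -/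
open MeasureTheory ProbabilityTheory Real Set Filter Topology

noncomputable section

/-- The characteristic function of a centered Gaussian vector is determined by its second
moments. -/
lemma charFun_map_toLp_of_centered_gaussian {ι Ω : Type*} [Fintype ι] [MeasurableSpace Ω]
    (P : Measure Ω) (X : ι → Ω → ℝ) (hm : ∀ i, Measurable (X i))
    (hX : ∀ c : ι → ℝ, ∃ v : NNReal,
      P.map (fun ω => ∑ i, c i * X i ω) = gaussianReal 0 v) (c : EuclideanSpace ℝ ι) :
    charFun (P.map fun ω => WithLp.toLp 2 fun i => X i ω) c =
      Complex.exp (-((∑ i, ∑ j, c i * c j * ∫ ω, X i ω * X j ω ∂P : ℝ) : ℂ) / 2) := by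
  classical
  have hLp (d : ι → ℝ) : MemLp (fun ω => ∑ i, d i * X i ω) 2 P := by
    obtain ⟨v, hv⟩ := hX d
    have : MemLp id 2 (P.map fun ω => ∑ i, d i * X i ω) := by
      rw [hv]; exact memLp_id_gaussianReal 2
    exact (memLp_map_measure_iff (g := id) (f := fun ω => ∑ i, d i * X i ω) (by fun_prop)
      (by fun_prop)).1 this
  have hL (i : ι) : MemLp (X i) 2 P := by simpa [Pi.single_apply] using hLp (Pi.single i 1)
  obtain ⟨v, hv⟩ := hX c
  have h2 : (v : ℝ) = ∑ i, ∑ j, c i * c j * ∫ ω, X i ω * X j ω ∂P := by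
    have h1 : ∫ x, x ^ 2 ∂(gaussianReal 0 v) = v := by
      have := variance_of_integral_eq_zero (X := fun x : ℝ => x) (μ := gaussianReal 0 v)
        (by fun_prop) (by simp)
      rw [variance_fun_id_gaussianReal] at this
      exact this.symm
    rw [← h1, ← hv, integral_map (by fun_prop) (by fun_prop)]
    simp_rw [sq, Finset.sum_mul_sum]
    have hint (i j : ι) : Integrable (fun ω => c i * X i ω * (c j * X j ω)) P :=
      ((hL i).const_mul (c i)).integrable_mul ((hL j).const_mul (c j))
    rw [integral_finsetSum _ fun i _ => integrable_finsetSum _ fun j _ => hint i j]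
    refine Finset.sum_congr rfl fun i _ => ?_
    rw [integral_finsetSum _ fun j _ => hint i j]
    refine Finset.sum_congr rfl fun j _ => ?_
    rw [← integral_const_mul]
    congr with ω
    ring
  have h3 : charFun (P.map fun ω => WithLp.toLp 2 fun i => X i ω) c =
      charFun (P.map fun ω => ∑ i, c i * X i ω) 1 := by
    rw [charFun_apply, charFun_apply_real, integral_map (by fun_prop) (by fun_prop),
      integral_map (by fun_prop) (by fun_prop)]
    simp [PiLp.inner_apply]
  rw [h3, hv, charFun_gaussianReal, ← h2]
  simp [neg_div]

/-- Centered Gaussian vectors whose second moments converge to those of a centered Gaussian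
vector converge weakly to it. -/
lemma tendsto_integral_of_tendsto_second_moments {ι Ω Ω' : Type*} [Fintype ι]
    [MeasurableSpace Ω] [MeasurableSpace Ω'] (P : Measure Ω) [IsProbabilityMeasure P]
    (Q : Measure Ω') [IsProbabilityMeasure Q]
    (X : ℕ → ι → Ω → ℝ) (Z : ι → Ω' → ℝ)
    (hXm : ∀ n i, Measurable (X n i)) (hZm : ∀ i, Measurable (Z i))
    (hX : ∀ n, ∀ c : ι → ℝ, ∃ v : NNReal,
      P.map (fun ω => ∑ i, c i * X n i ω) = gaussianReal 0 v)
    (hZ : ∀ c : ι → ℝ, ∃ v : NNReal,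
      Q.map (fun ω => ∑ i, c i * Z i ω) = gaussianReal 0 v)
    (hcov : ∀ i j, Tendsto (fun n => ∫ ω, X n i ω * X n j ω ∂P) atTop
      (𝓝 (∫ ω, Z i ω * Z j ω ∂Q)))
    (g : BoundedContinuousFunction (ι → ℝ) ℝ) :
    Tendsto (fun n => ∫ ω, g (fun i => X n i ω) ∂P) atTop
      (𝓝 (∫ ω, g (fun i => Z i ω) ∂Q)) := by
  have hXm' (n : ℕ) : Measurable fun ω => WithLp.toLp 2 fun i => X n i ω := by fun_prop
  have hZm' : Measurable fun ω => WithLp.toLp 2 fun i => Z i ω := by fun_prop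
  let ν (n : ℕ) : ProbabilityMeasure (EuclideanSpace ℝ ι) :=
    ⟨P.map fun ω => WithLp.toLp 2 fun i => X n i ω,
      Measure.isProbabilityMeasure_map (hXm' n).aemeasurable⟩
  let ν₀ : ProbabilityMeasure (EuclideanSpace ℝ ι) :=
    ⟨Q.map fun ω => WithLp.toLp 2 fun i => Z i ω,
      Measure.isProbabilityMeasure_map hZm'.aemeasurable⟩
  have hν : Tendsto ν atTop (𝓝 ν₀) := by
    refine ProbabilityMeasure.tendsto_of_tendsto_charFun fun c => ?_
    simp only [ν, ν₀, ProbabilityMeasure.coe_mk,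
      charFun_map_toLp_of_centered_gaussian P _ (hXm _) (hX _),
      charFun_map_toLp_of_centered_gaussian Q _ hZm hZ]
    refine (Complex.continuous_exp.tendsto _).comp (Tendsto.div_const (Tendsto.neg ?_) _)
    refine (Complex.continuous_ofReal.tendsto _).comp ?_
    exact tendsto_finsetSum _ fun i _ => tendsto_finsetSum _ fun j _ => (hcov i j).const_mul _
  have h := ProbabilityMeasure.tendsto_iff_forall_integral_tendsto.1 hν
    (g.compContinuous ⟨WithLp.ofLp, PiLp.continuous_ofLp 2 _⟩)
  change Tendsto (fun n => ∫ x, _ ∂(P.map _)) atTop (𝓝 (∫ x, _ ∂(Q.map _))) at h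
  rw [integral_map hZm'.aemeasurable (by fun_prop)] at h
  exact h.congr fun n => integral_map (hXm' n).aemeasurable (by fun_prop)

/-- Second moments of independent standard normal variables. -/
lemma integral_mul_pi_gaussianReal {ι : Type*} [Fintype ι] [DecidableEq ι] (a b : ι) :
    ∫ x : ι → ℝ, x a * x b ∂(Measure.pi fun _ : ι => gaussianReal 0 1) =
      if a = b then 1 else 0 := by
  have hmp (i : ι) := measurePreserving_eval (fun _ : ι => gaussianReal 0 1) i
  have h0 (i : ι) : ∫ x : ι → ℝ, x i ∂(Measure.pi fun _ : ι => gaussianReal 0 1) = 0 := by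
    have := integral_map (μ := Measure.pi fun _ : ι => gaussianReal 0 1)
      (hmp i).measurable.aemeasurable (f := fun x : ℝ => x) (by fun_prop)
    rw [(hmp i).map_eq] at this
    simpa using this.symm
  split_ifs with h
  · subst h
    have h1 := integral_map (μ := Measure.pi fun _ : ι => gaussianReal 0 1)
      (hmp a).measurable.aemeasurable (f := fun x : ℝ => x ^ 2) (by fun_prop)
    have h2 := variance_of_integral_eq_zero (X := fun x : ℝ => x) (μ := gaussianReal 0 1)
      (by fun_prop) (by simp)
    rw [(hmp a).map_eq] at h1
    rw [variance_fun_id_gaussianReal] at h2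
    rw [h1] at h2
    simpa [sq] using h2.symm
  · have hind := (iIndepFun_pi (μ := fun _ : ι => gaussianReal 0 1)
      (X := fun _ => (id : ℝ → ℝ)) (fun _ => aemeasurable_id)).indepFun h
    have := hind.integral_fun_mul_eq_mul_integral (measurable_pi_apply a).aestronglyMeasurable
      (measurable_pi_apply b).aestronglyMeasurable
    simpa [h0] using this

lemma integrable_mul_pi_gaussianReal {ι : Type*} [Fintype ι] (a b : ι) :
    Integrable (fun x : ι → ℝ => x a * x b) (Measure.pi fun _ : ι => gaussianReal 0 1) := by
  have h (i : ι) : MemLp (fun x : ι → ℝ => x i) 2 (Measure.pi fun _ : ι => gaussianReal 0 1) :=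
    (memLp_id_gaussianReal 2).comp_measurePreserving
      (measurePreserving_eval (fun _ : ι => gaussianReal 0 1) i)
  exact (h a).integrable_mul (h b)

/-- A linear form in independent standard normal variables is a centered Gaussian. -/
lemma exists_map_pi_gaussianReal_eq {ι : Type*} [Fintype ι] (L : (ι → ℝ) →L[ℝ] ℝ) :
    ∃ v : NNReal, (Measure.pi fun _ : ι => gaussianReal 0 1).map L = gaussianReal 0 v := by
  classical
  refine ⟨∑ i, (L (Pi.single i 1) ^ 2).toNNReal, Measure.ext_of_charFun (funext fun t => ?_)⟩
  rw [charFun_map_eq_charFunDual_smul, charFunDual_pi]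
  simp_rw [charFunDual_eq_charFun_map_one, gaussianReal_map_continuousLinearMap,
    charFun_gaussianReal]
  rw [← Complex.exp_sum]
  congr 1
  have hmax (i : ι) : max (t ^ 2 * L (Pi.single i 1) ^ 2) 0 = t ^ 2 * L (Pi.single i 1) ^ 2 :=
    max_eq_left (by positivity)
  simp [mul_pow, hmax, max_eq_left (sq_nonneg _), Finset.mul_sum, Finset.sum_div, mul_comm]

lemma tendsto_rpow_two_mul_nhdsGT_zero (s : ℝ) :
    Tendsto (fun H : ℝ => s ^ (2 * H)) (𝓝[>] 0) (𝓝 (if s = 0 then 0 else 1)) := by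
  split_ifs with h
  · refine tendsto_const_nhds.congr' ?_
    filter_upwards [self_mem_nhdsWithin] with H hH
    rw [h, Real.zero_rpow (by simpa using (ne_of_gt hH))]
  · have hc : Continuous fun H : ℝ => s ^ (2 * H) :=
      Real.continuous_const_rpow h |>.comp (by fun_prop)
    simpa using (hc.tendsto 0).mono_left nhdsWithin_le_nhds

/-- as `H → 0⁺`, the finite-dimensional distributions of `B^H` at times
`0 ≤ t₁ < … < t_k` converge weakly to those of `Z_t = (ξ_t - ξ_0)/√2` (with `Z_0 = 0`),
where the `ξ`'s are i.i.d. standard normal. Weak convergence is expressed by testing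
against bounded continuous functions. -/
theorem stmt7 {Ω : Type} [MeasurableSpace Ω] (μ : Measure Ω) [IsProbabilityMeasure μ]
    (B : ℝ → ℝ → Ω → ℝ) (hB : ∀ H ∈ Ioo (0:ℝ) 1, IsFBM μ H (B H))
    (k : ℕ) (t : Fin k → ℝ) (ht0 : ∀ j, 0 ≤ t j) (htmono : StrictMono t)
    (g : BoundedContinuousFunction (Fin k → ℝ) ℝ) :
    Tendsto (fun H => ∫ ω, g (fun j => B H (t j) ω) ∂μ) (𝓝[>] (0:ℝ))
      (𝓝 (∫ x : Fin (k + 1) → ℝ,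
        g (fun j => if t j = 0 then 0 else (x j.succ - x 0) / Real.sqrt 2)
          ∂(Measure.pi fun _ : Fin (k + 1) => gaussianReal 0 1))) := by
  let Z (j : Fin k) (x : Fin (k + 1) → ℝ) : ℝ :=
    if t j = 0 then 0 else (x j.succ - x 0) / Real.sqrt 2
  have hZ (j : Fin k) : ∃ L : (Fin (k + 1) → ℝ) →L[ℝ] ℝ, ∀ x, Z j x = L x := by
    by_cases h : t j = 0
    · exact ⟨0, fun x => by simp [Z, h]⟩
    · refine ⟨(Real.sqrt 2)⁻¹ • (ContinuousLinearMap.proj j.succ -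
        ContinuousLinearMap.proj (R := ℝ) (φ := fun _ : Fin (k + 1) => ℝ) 0), fun x => ?_⟩
      simp [Z, h, div_eq_inv_mul]
  choose L hL using hZ
  have hcovZ (i j : Fin k) :
      ∫ x, Z i x * Z j x ∂(Measure.pi fun _ : Fin (k + 1) => gaussianReal 0 1) =
        ((if t i = 0 then 0 else 1) + (if t j = 0 then 0 else 1) -
          (if |t j - t i| = 0 then 0 else 1)) / 2 := by
    by_cases hi : t i = 0
    · simp [Z, hi]
    by_cases hj : t j = 0
    · simp [Z, hj]
    have hij : |t j - t i| = 0 ↔ i = j := by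
      rw [abs_eq_zero, sub_eq_zero, htmono.injective.eq_iff, eq_comm]
    have hexp (x : Fin (k + 1) → ℝ) : Z i x * Z j x =
        (x i.succ * x j.succ - x i.succ * x 0 - x 0 * x j.succ + x 0 * x 0) / 2 := by
      simp only [Z, hi, hj, if_false]
      rw [div_mul_div_comm, Real.mul_self_sqrt (by norm_num)]
      ring
    have hI (a b : Fin (k + 1)) := integrable_mul_pi_gaussianReal a b
    simp_rw [hexp, integral_div]
    rw [integral_add (((hI i.succ j.succ).sub' (hI i.succ 0)).sub' (hI 0 j.succ)) (hI 0 0),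
      integral_sub ((hI i.succ j.succ).sub' (hI i.succ 0)) (hI 0 j.succ),
      integral_sub (hI i.succ j.succ) (hI i.succ 0)]
    simp only [integral_mul_pi_gaussianReal, hi, hj, hij, Fin.succ_inj, Fin.succ_ne_zero,
      (Fin.succ_ne_zero _).symm, if_false, if_true]
    split_ifs <;> norm_num
  refine tendsto_of_seq_tendsto fun u hu => ?_
  obtain ⟨N, hN⟩ := eventually_atTop.1
    (hu.eventually (Ioo_mem_nhdsGT (zero_lt_one : (0 : ℝ) < 1)))
  refine (tendsto_add_atTop_iff_nat N).1 ?_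
  have hN' (n : ℕ) := hB _ (hN (n + N) (Nat.le_add_left N n))
  refine tendsto_integral_of_tendsto_second_moments μ _ (fun n j => B (u (n + N)) (t j)) Z
    (fun n j => (hN' n).1.1 _ (ht0 j)) (fun j => ?_)
    (fun n c => (hN' n).1.2 k c t ht0) (fun c => ?_) (fun i j => ?_) g
  · rw [funext (hL j)]
    fun_prop
  · obtain ⟨v, hv⟩ := exists_map_pi_gaussianReal_eq (∑ i, c i • L i)
    refine ⟨v, ?_⟩
    rw [← hv]
    congr 1
    ext x
    simp [hL]
  · rw [hcovZ]
    simp_rw [fun n => (hN' n).2.2.2 (t i) (t j) (ht0 i) (ht0 j)]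
    exact ((((tendsto_rpow_two_mul_nhdsGT_zero (t i)).add
      (tendsto_rpow_two_mul_nhdsGT_zero (t j))).sub
      (tendsto_rpow_two_mul_nhdsGT_zero |t j - t i|)).div_const 2).comp
      (hu.comp (tendsto_add_atTop_nat N))
end
end

section
/- Let H_k ∈ (0,1) and integers n_k ≥ 1 be two sequences with H_k → 0 as k → ∞. Then the sequence f_k := f(H_k, n_k) is bounded if and only if the sequence (n_k) is bounded. -/
open MeasureTheory ProbabilityTheory Real Set Filter Topology

noncomputable section

/-- A second-moment lower bound: a nonnegative `M` dominating `log` of an exponential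
tilt of mean one is large in expectation when the tilt has small variance. -/
lemma le_integral_of_le_exp_mul {Ω : Type} [MeasurableSpace Ω] {μ : Measure Ω}
    [IsProbabilityMeasure μ] {M u : Ω → ℝ} {b : ℝ} (hb : 8 ≤ b)
    (hM : Integrable M μ) (hM0 : ∀ ω, 0 ≤ M ω) (hu : MemLp u 2 μ) (hu1 : ∫ ω, u ω ∂μ = 1)
    (hu2 : ∫ ω, u ω ^ 2 ∂μ ≤ 9 / 8) (hMu : ∀ ω, exp (b ^ 2 / 8) * u ω ≤ exp (b * M ω)) :
    (b / 8 - 1) / 2 ≤ ∫ ω, M ω ∂μ := by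
  have hui : Integrable u μ := hu.integrable (by norm_num)
  have husq : Integrable (fun ω => u ω ^ 2) μ := hu.integrable_sq
  have hpt : ∀ ω, (b / 8 - 1) * (8 * u ω - 4 * u ω ^ 2 - 3) ≤ M ω := by
    intro ω
    rcases le_or_gt (u ω) (1 / 2) with h | h
    · refine le_trans ?_ (hM0 ω)
      exact mul_nonpos_of_nonneg_of_nonpos (by linarith) (by nlinarith)
    · have h2 : exp (b ^ 2 / 8 - 1) ≤ exp (b * M ω) := by
        refine le_trans ?_ (hMu ω)
        rw [Real.exp_sub]
        have := Real.exp_pos (b ^ 2 / 8)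
        have he : (2 : ℝ) ≤ exp 1 := by linarith [Real.add_one_le_exp (1 : ℝ)]
        rw [div_le_iff₀ (Real.exp_pos 1)]
        have : 1 ≤ u ω * exp 1 := by nlinarith
        nlinarith
      have h3 : b ^ 2 / 8 - 1 ≤ b * M ω := Real.exp_le_exp.mp h2
      have h4 : b / 8 - 1 ≤ M ω := by nlinarith
      have h5 : 8 * u ω - 4 * u ω ^ 2 - 3 ≤ 1 := by nlinarith [sq_nonneg (u ω - 1)]
      nlinarith
  have hdiff : Integrable (fun ω => 8 * u ω - 4 * u ω ^ 2) μ :=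
    (hui.const_mul 8).sub (husq.const_mul 4)
  have hquad : Integrable (fun ω => (b / 8 - 1) * (8 * u ω - 4 * u ω ^ 2 - 3)) μ :=
    (hdiff.sub (integrable_const 3)).const_mul _
  have h := integral_mono hquad hM hpt
  have heq : ∫ ω, (b / 8 - 1) * (8 * u ω - 4 * u ω ^ 2 - 3) ∂μ
      = (b / 8 - 1) * (8 - 4 * ∫ ω, u ω ^ 2 ∂μ - 3) := by
    rw [integral_const_mul, integral_sub hdiff (integrable_const 3),
      integral_sub (hui.const_mul 8) (husq.const_mul 4),
      integral_const_mul, integral_const_mul, hu1]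
    simp
  rw [heq] at h
  nlinarith

lemma memLp_two_of_map_eq_gaussianReal {Ω : Type} [MeasurableSpace Ω] {μ : Measure Ω}
    {Y : Ω → ℝ} (hY : Measurable Y) {v : NNReal} (h : μ.map Y = gaussianReal 0 v) :
    MemLp Y 2 μ := by
  have h1 : MemLp id 2 (μ.map Y) := by
    rw [h]; exact memLp_id_gaussianReal 2
  exact (memLp_map_measure_iff (by fun_prop) hY.aemeasurable).mp h1

lemma integral_eq_zero_of_map_eq_gaussianReal {Ω : Type} [MeasurableSpace Ω] {μ : Measure Ω}
    {Y : Ω → ℝ} (hY : Measurable Y) {v : NNReal} (h : μ.map Y = gaussianReal 0 v) :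
    ∫ ω, Y ω ∂μ = 0 := by
  have h1 : ∫ x, x ∂(μ.map Y) = ∫ ω, Y ω ∂μ := integral_map hY.aemeasurable (by fun_prop)
  rw [← h1, h, integral_id_gaussianReal]

lemma integral_sq_of_map_eq_gaussianReal {Ω : Type} [MeasurableSpace Ω] {μ : Measure Ω}
    {Y : Ω → ℝ} (hY : Measurable Y) {v : NNReal} (h : μ.map Y = gaussianReal 0 v) :
    ∫ ω, Y ω ^ 2 ∂μ = v := by
  have h1 : ∫ x, x ^ 2 ∂(μ.map Y) = ∫ ω, Y ω ^ 2 ∂μ :=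
    integral_map hY.aemeasurable (by fun_prop)
  have h2 := variance_fun_id_gaussianReal (μ := 0) (v := v)
  rw [variance_eq_integral (by fun_prop)] at h2
  simp only [integral_id_gaussianReal, sub_zero] at h2
  rw [← h1, h, h2]

lemma integrable_exp_of_map_eq_gaussianReal {Ω : Type} [MeasurableSpace Ω] {μ : Measure Ω}
    {Y : Ω → ℝ} (hY : Measurable Y) {v : NNReal} (h : μ.map Y = gaussianReal 0 v) (b : ℝ) :
    Integrable (fun ω => exp (b * Y ω)) μ := by
  have h1 : Integrable (fun x => exp (b * x)) (μ.map Y) := by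
    rw [h]; exact integrable_exp_mul_gaussianReal b
  exact (integrable_map_measure (by fun_prop) hY.aemeasurable).mp h1

lemma integral_exp_of_map_eq_gaussianReal {Ω : Type} [MeasurableSpace Ω] {μ : Measure Ω}
    {Y : Ω → ℝ} {v : NNReal} (h : μ.map Y = gaussianReal 0 v) (b : ℝ) :
    ∫ ω, exp (b * Y ω) ∂μ = exp (v * b ^ 2 / 2) := by
  have := mgf_gaussianReal h b
  simpa [mgf] using this

/-- Covariance of two linear combinations of a family with covariance matrix `C`. -/
def bilin {m : ℕ} (C : Fin m → Fin m → ℝ) (a b : Fin m → ℝ) : ℝ :=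
  ∑ i, ∑ j, a i * b j * C i j

lemma bilin_add_self {m : ℕ} {C : Fin m → Fin m → ℝ} (hC : ∀ i j, C i j = C j i)
    (a b : Fin m → ℝ) :
    bilin C (a + b) (a + b) = bilin C a a + bilin C b b + 2 * bilin C a b := by
  have h : bilin C b a = bilin C a b := by
    unfold bilin
    rw [Finset.sum_comm]
    refine Finset.sum_congr rfl fun i _ => Finset.sum_congr rfl fun j _ => ?_
    rw [hC j i]; ring
  have h2 : bilin C (a + b) (a + b)
      = bilin C a a + bilin C b b + bilin C a b + bilin C b a := by
    unfold bilin
    simp only [← Finset.sum_add_distrib]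
    refine Finset.sum_congr rfl fun i _ => Finset.sum_congr rfl fun j _ => ?_
    simp only [Pi.add_apply]; ring
  rw [h2, h]; ring

lemma abs_bilin_sub_le {m : ℕ} {C : Fin m → Fin m → ℝ} {ε : ℝ}
    (hC : ∀ i j, |C i j - ((if i = j then 1 / 2 else 0) + 1 / 2)| ≤ ε) (a b : Fin m → ℝ) :
    |bilin C a b - (∑ i, a i * b i + (∑ i, a i) * ∑ i, b i) / 2|
      ≤ ε * ((∑ i, |a i|) * ∑ i, |b i|) := by
  have h : bilin C a b - (∑ i, a i * b i + (∑ i, a i) * ∑ i, b i) / 2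
      = ∑ i, ∑ j, a i * b j * (C i j - ((if i = j then 1 / 2 else 0) + 1 / 2)) := by
    unfold bilin
    simp only [mul_sub, mul_add, Finset.sum_sub_distrib, Finset.sum_add_distrib, mul_ite,
      mul_zero, Finset.sum_ite_eq, Finset.mem_univ, if_true]
    rw [Finset.sum_mul_sum]
    simp only [← Finset.sum_mul]
    ring
  rw [h, Finset.sum_mul_sum, Finset.mul_sum]
  refine (Finset.abs_sum_le_sum_abs _ _).trans (Finset.sum_le_sum fun i _ => ?_)
  rw [Finset.mul_sum]
  refine (Finset.abs_sum_le_sum_abs _ _).trans (Finset.sum_le_sum fun j _ => ?_)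
  rw [abs_mul, abs_mul, mul_comm ε]
  exact mul_le_mul_of_nonneg_left (hC i j) (by positivity)

/-- Coefficients of the deviation of the `i`-th variable from the average. -/
def devCoeff {m : ℕ} (i : Fin m) : Fin m → ℝ := fun k => (if k = i then 1 else 0) - 1 / m

lemma sum_devCoeff_mul {m : ℕ} (i : Fin m) (x : Fin m → ℝ) :
    ∑ k, devCoeff i k * x k = x i - (∑ k, x k) / m := by
  simp only [devCoeff, sub_mul, Finset.sum_sub_distrib, ite_mul, one_mul, zero_mul,
    Finset.sum_ite_eq', Finset.mem_univ, if_true, ← Finset.mul_sum]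
  ring

lemma sum_devCoeff {m : ℕ} (i : Fin m) : ∑ k, devCoeff i k = 0 := by
  have hm : (m : ℝ) ≠ 0 := by exact_mod_cast i.pos.ne'
  have := sum_devCoeff_mul i (fun _ => 1)
  simp only [mul_one, Finset.sum_const, Finset.card_univ, Fintype.card_fin, nsmul_eq_mul] at this
  rw [this, div_self hm, sub_self]

lemma sum_abs_devCoeff_le {m : ℕ} (i : Fin m) : ∑ k, |devCoeff i k| ≤ 2 := by
  have hm : (m : ℝ) ≠ 0 := by exact_mod_cast i.pos.ne'
  calc ∑ k, |devCoeff i k| ≤ ∑ k : Fin m, ((if k = i then (1 : ℝ) else 0) + 1 / m) := by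
        refine Finset.sum_le_sum fun k _ => ?_
        refine (abs_sub _ _).trans (le_of_eq ?_)
        rw [abs_of_nonneg (by positivity : (0 : ℝ) ≤ 1 / m), abs_of_nonneg (by split_ifs <;> simp)]
    _ = 2 := by
        simp [Finset.sum_add_distrib, hm]; norm_num

lemma sum_devCoeff_mul_devCoeff {m : ℕ} (i j : Fin m) :
    ∑ k, devCoeff i k * devCoeff j k = (if i = j then 1 else 0) - 1 / m := by
  rw [sum_devCoeff_mul, sum_devCoeff]
  simp [devCoeff]

lemma abs_bilin_devCoeff_sub_le {m : ℕ} {C : Fin m → Fin m → ℝ} {ε : ℝ} (hε : 0 ≤ ε)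
    (hC : ∀ i j, |C i j - ((if i = j then 1 / 2 else 0) + 1 / 2)| ≤ ε) (i j : Fin m) :
    |bilin C (devCoeff i) (devCoeff j) - ((if i = j then 1 else 0) - 1 / m) / 2| ≤ 4 * ε := by
  have h := abs_bilin_sub_le hC (devCoeff i) (devCoeff j)
  rw [sum_devCoeff_mul_devCoeff, sum_devCoeff, zero_mul, add_zero] at h
  refine h.trans ?_
  have h1 := sum_abs_devCoeff_le i
  have h2 := sum_abs_devCoeff_le j
  have h3 : 0 ≤ ∑ k, |devCoeff i k| := Finset.sum_nonneg fun _ _ => abs_nonneg _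
  have h4 : (∑ k, |devCoeff i k|) * ∑ k, |devCoeff j k| ≤ 2 * 2 :=
    mul_le_mul h1 h2 (Finset.sum_nonneg fun _ _ => abs_nonneg _) (by norm_num)
  nlinarith

/-- A variable dominating a Gaussian family whose covariance is close to `(I + J) / 2`
(`J` the all-ones matrix) has large expectation if the family is large. -/
lemma le_integral_of_gaussian_family {Ω : Type} [MeasurableSpace Ω] {μ : Measure Ω}
    [IsProbabilityMeasure μ] {m : ℕ} {X : Fin m → Ω → ℝ} (hX : ∀ i, Measurable (X i))
    (hG : ∀ c : Fin m → ℝ, ∃ v : NNReal, μ.map (fun ω => ∑ i, c i * X i ω) = gaussianReal 0 v)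
    {b ε : ℝ} (hb : 8 ≤ b) (hε : 0 ≤ ε) (hεb : ε * (128 * b ^ 2) ≤ 1)
    (hm : 16 * exp (b ^ 2) ≤ m)
    (hC : ∀ i j, |∫ ω, X i ω * X j ω ∂μ - ((if i = j then 1 / 2 else 0) + 1 / 2)| ≤ ε)
    {S : Ω → ℝ} (hS : Integrable S μ) (hXS : ∀ i ω, X i ω ≤ S ω) :
    (b / 8 - 1) / 2 ≤ ∫ ω, S ω ∂μ := by
  have hm16 : (16 : ℝ) ≤ m := by
    nlinarith [Real.add_one_le_exp (b ^ 2), sq_nonneg b]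
  have hm0 : (0 : ℝ) < m := by linarith
  set C : Fin m → Fin m → ℝ := fun i j => ∫ ω, X i ω * X j ω ∂μ with hCdef
  have hCsymm : ∀ i j, C i j = C j i := fun i j => by simp only [hCdef, mul_comm]
  have hLmeas : ∀ c : Fin m → ℝ, Measurable (fun ω => ∑ i, c i * X i ω) := fun c => by fun_prop
  have hX2 : ∀ i, MemLp (X i) 2 μ := by
    intro i
    obtain ⟨v, hv⟩ := hG (Pi.single i 1)
    have := memLp_two_of_map_eq_gaussianReal (hLmeas _) hv
    simpa [Pi.single_apply] using this
  have hvar : ∀ c : Fin m → ℝ,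
      μ.map (fun ω => ∑ i, c i * X i ω) = gaussianReal 0 (bilin C c c).toNNReal ∧
        0 ≤ bilin C c c := by
    intro c
    obtain ⟨v, hv⟩ := hG c
    have h1 := integral_sq_of_map_eq_gaussianReal (hLmeas c) hv
    have h2 : ∫ ω, (∑ i, c i * X i ω) ^ 2 ∂μ = bilin C c c := by
      simp only [sq, Finset.sum_mul_sum]
      rw [integral_finsetSum]
      · refine Finset.sum_congr rfl fun i _ => ?_
        rw [integral_finsetSum]
        · refine Finset.sum_congr rfl fun j _ => ?_
          rw [← integral_const_mul]
          exact integral_congr_ae (.of_forall fun ω => by ring)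
        · exact fun j _ => ((hX2 i).const_mul _).integrable_mul ((hX2 j).const_mul _)
      · exact fun i _ => integrable_finsetSum _ fun j _ =>
          ((hX2 i).const_mul _).integrable_mul ((hX2 j).const_mul _)
    rw [← h2, h1]
    simp [hv]
  have hexp : ∀ c : Fin m → ℝ,
      ∫ ω, exp (b * ∑ i, c i * X i ω) ∂μ = exp (bilin C c c * b ^ 2 / 2) := by
    intro c
    rw [integral_exp_of_map_eq_gaussianReal (hvar c).1, Real.coe_toNNReal _ (hvar c).2]
  have hexpi : ∀ c : Fin m → ℝ, Integrable (fun ω => exp (b * ∑ i, c i * X i ω)) μ :=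
    fun c => integrable_exp_of_map_eq_gaussianReal (hLmeas c) (hvar c).1 b
  set W : Fin m → Ω → ℝ := fun i ω => ∑ k, devCoeff i k * X k ω with hW
  set q : Fin m → Fin m → ℝ := fun i j => bilin C (devCoeff i) (devCoeff j) with hq
  have hqb : ∀ i j, |q i j - ((if i = j then 1 else 0) - 1 / m) / 2| ≤ 4 * ε :=
    abs_bilin_devCoeff_sub_le hε hC
  have hinvm : 1 / (m : ℝ) ≤ 1 / 16 := one_div_le_one_div_of_le (by norm_num) hm16
  have hinvm0 : 0 ≤ 1 / (m : ℝ) := by positivity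
  have hε' : 4 * ε ≤ 1 / 16 := by nlinarith [mul_nonneg hε (by nlinarith : 0 ≤ b ^ 2 - 64)]
  have hWadd : ∀ i j ω, W i ω + W j ω = ∑ k, (devCoeff i + devCoeff j) k * X k ω := by
    intro i j ω
    simp only [hW, ← Finset.sum_add_distrib, Pi.add_apply, add_mul]
  set e : Fin m → Ω → ℝ := fun i ω => exp (b * W i ω - q i i * b ^ 2 / 2) with he
  have he1 : ∀ i, ∫ ω, e i ω ∂μ = 1 := by
    intro i
    simp only [he, Real.exp_sub]
    rw [integral_div, hexp]
    exact div_self (Real.exp_ne_zero _)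
  have hee_eq : ∀ i j ω, e i ω * e j ω = exp (b * ∑ k, (devCoeff i + devCoeff j) k * X k ω)
      / exp ((q i i + q j j) * b ^ 2 / 2) := by
    intro i j ω
    rw [← hWadd]
    simp only [he]
    rw [← Real.exp_add, ← Real.exp_sub]
    congr 1; ring
  have hee : ∀ i j, ∫ ω, e i ω * e j ω ∂μ = exp (q i j * b ^ 2) := by
    intro i j
    simp only [hee_eq]
    rw [integral_div, hexp, bilin_add_self hCsymm, ← Real.exp_sub]
    congr 1; simp only [hq]; ring
  have heei : ∀ i j, Integrable (fun ω => e i ω * e j ω) μ := by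
    intro i j
    simp only [hee_eq]
    exact (hexpi _).div_const _
  have hem : ∀ i, Measurable (e i) := fun i => by
    have := hLmeas (devCoeff i)
    simp only [he, hW]
    fun_prop
  have he2 : ∀ i, MemLp (e i) 2 μ := fun i => by
    rw [memLp_two_iff_integrable_sq (hem i).aestronglyMeasurable]
    simpa only [sq] using heei i i
  set u : Ω → ℝ := fun ω => (∑ i, e i ω) / m with hu
  have hu2 : MemLp u 2 μ := by
    have := (memLp_finsetSum Finset.univ fun i _ => he2 i).const_mul (1 / (m : ℝ))
    refine this.congr_norm ?_ (.of_forall fun ω => ?_)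
    · simp only [hu]; fun_prop
    · simp only [hu]; congr 1; ring
  have hY0 : ∫ ω, (∑ i, X i ω) / m ∂μ = 0 := by
    rw [integral_div]
    obtain ⟨v, hv⟩ := hG 1
    have := integral_eq_zero_of_map_eq_gaussianReal (hLmeas _) hv
    simp only [Pi.one_apply, one_mul] at this
    rw [this, zero_div]
  have hYi : Integrable (fun ω => (∑ i, X i ω) / m) μ :=
    (integrable_finsetSum _ fun i _ => (hX2 i).integrable (by norm_num)).div_const _
  have key := le_integral_of_le_exp_mul (μ := μ) (M := fun ω => S ω - (∑ i, X i ω) / m)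
    (u := u) hb (hS.sub hYi) ?_ hu2 ?_ ?_ ?_
  · rwa [integral_sub hS hYi, hY0, sub_zero] at key
  · intro ω
    have : ∑ i, X i ω ≤ ∑ _i : Fin m, S ω := Finset.sum_le_sum fun i _ => hXS i ω
    simp only [Finset.sum_const, Finset.card_univ, Fintype.card_fin, nsmul_eq_mul] at this
    rw [sub_nonneg, div_le_iff₀ hm0]
    linarith
  · simp only [hu]
    rw [integral_div, integral_finsetSum _ fun i _ => (he2 i).integrable (by norm_num)]
    simp [he1, hm0.ne']
  · have h1 : ∫ ω, u ω ^ 2 ∂μ = (∑ i, ∑ j, exp (q i j * b ^ 2)) / m ^ 2 := by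
      simp only [hu, div_pow]
      rw [integral_div]
      simp only [sq (∑ i, e i _), Finset.sum_mul_sum]
      rw [integral_finsetSum _ fun i _ => integrable_finsetSum _ fun j _ => heei i j]
      simp only [integral_finsetSum _ fun j _ => heei _ j, hee]
    rw [h1, div_le_iff₀ (by positivity)]
    have h2 : ∀ i j, exp (q i j * b ^ 2) ≤ 17 / 16 + if i = j then exp (b ^ 2) else 0 := by
      intro i j
      have hij := (abs_le.mp (hqb i j)).2
      split_ifs at hij ⊢ with hh
      · have : exp (q i j * b ^ 2) ≤ exp (b ^ 2) := by
          apply Real.exp_le_exp.mpr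
          have : q i j ≤ 1 := by linarith
          nlinarith [sq_nonneg b]
        linarith
      · have h3 : q i j * b ^ 2 ≤ 1 / 32 := by
          have : q i j ≤ 4 * ε := by linarith
          nlinarith [sq_nonneg b]
        have h4 : exp (q i j * b ^ 2) ≤ exp (1 / 32) := Real.exp_le_exp.mpr h3
        have h5 : exp (1 / 32 : ℝ) ≤ 17 / 16 := by
          have h6 := Real.add_one_le_exp (-(1 / 32) : ℝ)
          have h7 : exp (1 / 32 : ℝ) * exp (-(1 / 32)) = 1 := by
            rw [← Real.exp_add]; simp
          nlinarith [Real.exp_pos (1 / 32 : ℝ)]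
        linarith
    refine (Finset.sum_le_sum fun i _ => Finset.sum_le_sum fun j _ => h2 i j).trans ?_
    simp [Finset.sum_add_distrib]
    nlinarith
  · intro ω
    have h1 : ∀ i, exp (b ^ 2 / 8) * e i ω ≤ exp (b * (S ω - (∑ i, X i ω) / m)) := by
      intro i
      simp only [he]
      rw [← Real.exp_add]
      apply Real.exp_le_exp.mpr
      have h2 : W i ω ≤ S ω - (∑ i, X i ω) / m := by
        simp only [hW, sum_devCoeff_mul]
        linarith [hXS i ω]
      have h3 : 1 / 4 ≤ q i i := by
        have := (abs_le.mp (hqb i i)).1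
        simp only [if_true] at this
        linarith
      nlinarith [sq_nonneg b]
    have h2 := Finset.sum_le_sum fun i (_ : i ∈ Finset.univ) => h1 i
    simp only [← Finset.mul_sum, Finset.sum_const, Finset.card_univ, Fintype.card_fin,
      nsmul_eq_mul] at h2
    simp only [hu]
    rw [mul_div_assoc', div_le_iff₀ hm0]
    linarith

lemma IsFBM.memLp_two {Ω : Type} [MeasurableSpace Ω] {μ : Measure Ω} {H : ℝ}
    {B : ℝ → Ω → ℝ} (hB : IsFBM μ H B) {t : ℝ} (ht : 0 ≤ t) : MemLp (B t) 2 μ := by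
  obtain ⟨v, hv⟩ := hB.1.2 1 (fun _ => 1) (fun _ => t) (fun _ => ht)
  have hv' : μ.map (B t) = gaussianReal 0 v := by simpa using hv
  exact memLp_two_of_map_eq_gaussianReal (hB.1.1 t ht) hv'

lemma IsFBM.integral_abs_le_one {Ω : Type} [MeasurableSpace Ω] {μ : Measure Ω}
    [IsProbabilityMeasure μ] {H : ℝ} (hH : 0 < H)
    {B : ℝ → Ω → ℝ} (hB : IsFBM μ H B) {t : ℝ} (ht : 0 ≤ t) (ht1 : t ≤ 1) :
    ∫ ω, |B t ω| ∂μ ≤ 1 := by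
  have h2 := hB.memLp_two ht
  have hsq : Integrable (fun ω => B t ω * B t ω) μ := h2.integrable_mul h2
  have hc := hB.2.2.2 t t ht ht
  rw [sub_self, abs_zero, Real.zero_rpow (by positivity)] at hc
  have h1 : t ^ (2 * H) ≤ 1 := Real.rpow_le_one ht ht1 (by positivity)
  have h3 : ∫ ω, |B t ω| ∂μ ≤ ∫ ω, (B t ω * B t ω + 1) / 2 ∂μ := by
    refine integral_mono (h2.integrable (by norm_num)).abs
      ((hsq.add (integrable_const 1)).div_const 2) fun ω => ?_
    have := sq_nonneg (|B t ω| - 1)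
    have := abs_mul_abs_self (B t ω)
    dsimp only
    nlinarith
  rw [integral_div, integral_add hsq (integrable_const 1), hc] at h3
  simp at h3
  linarith

lemma abs_iSup_fin_le {m : ℕ} (x : Fin (m + 1) → ℝ) : |⨆ i, x i| ≤ ∑ i, |x i| := by
  have h : ∀ i, |x i| ≤ ∑ i, |x i| := fun i =>
    Finset.single_le_sum (f := fun i => |x i|) (fun _ _ => abs_nonneg _) (Finset.mem_univ i)
  obtain ⟨i, hi⟩ := exists_eq_ciSup_of_finite (f := x)
  rw [← hi]; exact h i

lemma IsFBM.integrable_sup_grid {Ω : Type} [MeasurableSpace Ω] {μ : Measure Ω}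
    [IsProbabilityMeasure μ] {H : ℝ} {B : ℝ → Ω → ℝ} (hB : IsFBM μ H B) (n : ℕ) :
    Integrable (fun ω => ⨆ i : Fin (n + 1), B (((i : ℕ) : ℝ) / (n : ℝ)) ω) μ := by
  have h : ∀ i : Fin (n + 1), Integrable (B (((i : ℕ) : ℝ) / (n : ℝ))) μ := fun i =>
    (hB.memLp_two (by positivity)).integrable (by norm_num)
  refine (integrable_finsetSum Finset.univ fun i _ => (h i).abs).mono' ?_
    (.of_forall fun ω => abs_iSup_fin_le _)
  exact (Measurable.iSup fun i => hB.1.1 _ (by simp only [mem_Ici]; positivity)).aestronglyMeasurable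

lemma IsFBM.abs_expMaxGrid_le {Ω : Type} [MeasurableSpace Ω] {μ : Measure Ω}
    [IsProbabilityMeasure μ] {H : ℝ} (hH : 0 < H) {B : ℝ → Ω → ℝ} (hB : IsFBM μ H B) (n : ℕ) :
    |expMaxGrid μ B n| ≤ n + 1 := by
  have h : ∀ i : Fin (n + 1), Integrable (B (((i : ℕ) : ℝ) / (n : ℝ))) μ := fun i =>
    (hB.memLp_two (by positivity)).integrable (by norm_num)
  unfold expMaxGrid
  refine abs_integral_le_integral_abs.trans ?_
  refine (integral_mono (hB.integrable_sup_grid n).abs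
    (integrable_finsetSum Finset.univ fun i _ => (h i).abs)
    fun ω => abs_iSup_fin_le _).trans ?_
  rw [integral_finsetSum _ fun i _ => (h i).abs]
  refine (Finset.sum_le_sum fun i _ => hB.integral_abs_le_one hH (by positivity)
    (div_le_one_of_le₀ ?_ (by positivity))).trans ?_
  · exact_mod_cast Nat.lt_succ_iff.mp i.2
  · simp

lemma IsFBM.le_expMaxGrid {Ω : Type} [MeasurableSpace Ω] {μ : Measure Ω}
    [IsProbabilityMeasure μ] {H : ℝ} (hH : 0 < H) {B : ℝ → Ω → ℝ} (hB : IsFBM μ H B) {m n : ℕ}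
    (hmn : m ≤ n) {b ε : ℝ} (hb : 8 ≤ b) (hε : 0 ≤ ε) (hεb : ε * (128 * b ^ 2) ≤ 1)
    (hm : 16 * exp (b ^ 2) ≤ m) (hHm : 1 - ε ≤ (1 / (2 * m) : ℝ) ^ (2 * H)) :
    (b / 8 - 1) / 2 ≤ expMaxGrid μ B n := by
  have hm0 : 0 < m := by
    have : (0 : ℝ) < m := lt_of_lt_of_le (by positivity) hm
    exact_mod_cast this
  have hn0 : 0 < n := hm0.trans_le hmn
  set d := n / m with hd
  have hd1 : 1 ≤ d := (Nat.one_le_div_iff hm0).mpr hmn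
  have hdm : d * m ≤ n := Nat.div_mul_le_self n m
  have hdn : n ≤ 2 * m * d := by
    have := Nat.lt_mul_div_succ n hm0
    nlinarith
  set t : Fin m → ℝ := fun j => (((j + 1) * d : ℕ) : ℝ) / n with ht
  have hidx : ∀ j : Fin m, (j + 1) * d < n + 1 := fun j => by
    have : (j + 1 : ℕ) ≤ m := j.2
    nlinarith
  have hdnR : (1 / (2 * m) : ℝ) ≤ d / n := by
    rw [div_le_div_iff₀ (by positivity) (by positivity)]
    have : (n : ℝ) ≤ 2 * m * d := by exact_mod_cast hdn
    linarith
  have hrange : ∀ x : ℝ, (d / n : ℝ) ≤ x → x ≤ 1 → 1 - ε ≤ x ^ (2 * H) ∧ x ^ (2 * H) ≤ 1 := by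
    intro x hx hx1
    have hpos : (0 : ℝ) ≤ 1 / (2 * m) := by positivity
    refine ⟨hHm.trans (Real.rpow_le_rpow hpos (hdnR.trans hx) (by positivity)),
      Real.rpow_le_one (hpos.trans (hdnR.trans hx)) hx1 (by positivity)⟩
  have hd0 : (0 : ℝ) ≤ d / n := by positivity
  have ht0 : ∀ j, (d / n : ℝ) ≤ t j := fun j => by
    simp only [ht]
    gcongr
    exact Nat.le_mul_of_pos_left d (Nat.succ_pos _)
  have ht1 : ∀ j, t j ≤ 1 := fun j =>
    div_le_one_of_le₀ (by exact_mod_cast Nat.lt_succ_iff.mp (hidx j)) (by positivity)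
  have htpos : ∀ j, 0 ≤ t j := fun j => hd0.trans (ht0 j)
  have hsep : ∀ i j : Fin m, i ≠ j → (d / n : ℝ) ≤ |t j - t i| := by
    intro i j hij
    have h1 : t j - t i = ((j : ℝ) - i) * (d / n) := by
      simp only [ht]; push_cast; ring
    have h2 : (1 : ℝ) ≤ |(j : ℝ) - i| := by
      have : (1 : ℤ) ≤ |(j : ℤ) - i| := Int.one_le_abs (by
        have := Fin.val_ne_of_ne hij
        omega)
      exact_mod_cast this
    rw [h1, abs_mul, abs_of_nonneg hd0]
    nlinarith
  refine le_integral_of_gaussian_family (X := fun j => B (t j))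
    (fun j => hB.1.1 _ (htpos j)) (fun c => hB.1.2 m c t htpos) hb hε hεb hm ?_
    (hB.integrable_sup_grid n) ?_
  · intro i j
    rw [hB.2.2.2 _ _ (htpos i) (htpos j)]
    have hi := hrange _ (ht0 i) (ht1 i)
    have hj := hrange _ (ht0 j) (ht1 j)
    split_ifs with h
    · subst h
      rw [sub_self, abs_zero, Real.zero_rpow (by positivity), abs_le]
      constructor <;> linarith
    · have hij := hrange _ (hsep i j h) (abs_le.mpr ⟨by linarith [ht1 i, htpos j],
        by linarith [ht1 j, htpos i]⟩)
      rw [abs_le]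
      constructor <;> linarith
  · intro j ω
    exact le_ciSup (f := fun i : Fin (n + 1) => B (((i : ℕ) : ℝ) / (n : ℝ)) ω)
      (Set.finite_range _).bddAbove ⟨(j + 1) * d, hidx j⟩

/-- for sequences `H_k → 0` in `(0,1)` and integers `n_k ≥ 1`, the sequence
`f_k = f(H_k, n_k)` is bounded if and only if `(n_k)` is bounded. -/
theorem stmt11 {Ω : Type} [MeasurableSpace Ω] (μ : Measure Ω) [IsProbabilityMeasure μ]
    (H : ℕ → ℝ) (hH : ∀ k, H k ∈ Ioo (0:ℝ) 1) (hHlim : Tendsto H atTop (𝓝 0))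
    (n : ℕ → ℕ) (hn : ∀ k, 1 ≤ n k)
    (B : ℕ → ℝ → Ω → ℝ) (hB : ∀ k, IsFBM μ (H k) (B k)) :
    (∃ M : ℝ, ∀ k, |expMaxGrid μ (B k) (n k)| ≤ M) ↔ (∃ N : ℕ, ∀ k, n k ≤ N) := by
  constructor
  · rintro ⟨M, hM⟩
    by_contra! hunb
    have hM0 : 0 ≤ M := (abs_nonneg _).trans (hM 0)
    set b : ℝ := 16 * M + 24 with hb
    obtain ⟨m, hm⟩ := exists_nat_ge (16 * exp (b ^ 2))
    have hm0 : (0 : ℝ) < m := lt_of_lt_of_le (by positivity) hm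
    have hbpos : 0 < b := by positivity
    have hlim : Tendsto (fun k => (1 / (2 * m) : ℝ) ^ (2 * H k)) atTop (𝓝 1) := by
      have h := (tendsto_const_nhds (x := (1 / (2 * m) : ℝ))).rpow (hHlim.const_mul 2)
        (Or.inl (by positivity))
      simpa using h
    have hev := hlim.eventually_const_le
      (show 1 - 1 / (128 * b ^ 2) < 1 by linarith [show 0 < 1 / (128 * b ^ 2) by positivity])
    obtain ⟨K, hK⟩ := eventually_atTop.mp hev
    obtain ⟨k, hk⟩ := hunb (m + ∑ i ∈ Finset.range K, n i)
    have hkK : K ≤ k := by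
      by_contra! h
      have := Finset.single_le_sum (f := n) (fun _ _ => Nat.zero_le _) (Finset.mem_range.mpr h)
      omega
    have := (hB k).le_expMaxGrid (hH k).1 (m := m) (n := n k) (by omega) (b := b)
      (ε := 1 / (128 * b ^ 2)) (by linarith) (by positivity)
      (by rw [one_div_mul_cancel (by positivity)]) hm (hK k hkK)
    have := le_abs_self (expMaxGrid μ (B k) (n k))
    linarith [hM k]
  · rintro ⟨N, hN⟩
    refine ⟨N + 1, fun k => ((hB k).abs_expMaxGrid_le (hH k).1 (n k)).trans ?_⟩
    have : (n k : ℝ) ≤ N := by exact_mod_cast hN k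
    linarith
end
end

section
/- The functions H ↦ f(H) and H ↦ f(H,n) (for each fixed integer n ≥ 1) are non-increasing on (0,1): if 0 < H₁ ≤ H₂ < 1 then f(H₂) ≤ f(H₁) and f(H₂,n) ≤ f(H₁,n). -/
open MeasureTheory ProbabilityTheory Real Set Filter Topology

noncomputable section

/-- The log-sum-exp function, a smooth approximation of the maximum. -/
def logSumExp {ι : Type*} [Fintype ι] (x : ι → ℝ) : ℝ := log (∑ i, exp (x i))

/-- The softmax weights, i.e. the gradient of `logSumExp`. -/
def softmax {ι : Type*} [Fintype ι] (x : ι → ℝ) (i : ι) : ℝ := exp (x i) / ∑ j, exp (x j)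

section LogSumExp

variable {ι : Type*} [Fintype ι]

lemma nonpos_of_hasDerivAt_nonpos {f f' : ℝ → ℝ} (hf : ∀ s, HasDerivAt f (f' s) s)
    (h0 : f 0 ≤ 0) (hf' : ∀ s ∈ Icc (0 : ℝ) 1, f' s ≤ 0) : ∀ s ∈ Icc (0 : ℝ) 1, f s ≤ 0 := by
  intro s hs
  have hanti : AntitoneOn f (Icc 0 1) := by
    refine antitoneOn_of_hasDerivWithinAt_nonpos (f' := f') (convex_Icc 0 1)
      (fun x _ => (hf x).continuousAt.continuousWithinAt)
      (fun x _ => (hf x).hasDerivWithinAt) fun x hx => hf' x (interior_subset hx)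
  exact (hanti ⟨le_rfl, zero_le_one⟩ hs hs.1).trans h0

lemma taylor_two_le {h h₁ h₂ h₃ : ℝ → ℝ} {K : ℝ} (hh : ∀ s, HasDerivAt h (h₁ s) s)
    (hh₁ : ∀ s, HasDerivAt h₁ (h₂ s) s) (hh₂ : ∀ s, HasDerivAt h₂ (h₃ s) s)
    (hK : ∀ s, h₃ s ≤ 6 * K) : h 1 - (h 0 + h₁ 0 + h₂ 0 / 2) ≤ K := by
  have e2 := nonpos_of_hasDerivAt_nonpos (f := fun s => h₂ s - (h₂ 0 + 6 * K * s))
    (f' := fun s => h₃ s - 6 * K)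
    (fun s => by
      convert! (hh₂ s).sub ((((hasDerivAt_id s).const_mul (6 * K))).const_add (h₂ 0)) using 1
      ring) (by simp) (fun s _ => by linarith [hK s])
  have e1 := nonpos_of_hasDerivAt_nonpos (f := fun s => h₁ s - (h₁ 0 + h₂ 0 * s + 3 * K * s ^ 2))
    (f' := fun s => h₂ s - (h₂ 0 + 6 * K * s))
    (fun s => by
      convert! (hh₁ s).sub ((((hasDerivAt_id s).const_mul (h₂ 0)).const_add (h₁ 0)).add
        (((hasDerivAt_id s).pow 2).const_mul (3 * K))) using 1
      simp; ring) (by simp) e2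
  have e0 := nonpos_of_hasDerivAt_nonpos
    (f := fun s => h s - (h 0 + h₁ 0 * s + h₂ 0 / 2 * s ^ 2 + K * s ^ 3))
    (f' := fun s => h₁ s - (h₁ 0 + h₂ 0 * s + 3 * K * s ^ 2))
    (fun s => by
      convert! (hh s).sub (((((hasDerivAt_id s).const_mul (h₁ 0)).const_add (h 0)).add
        (((hasDerivAt_id s).pow 2).const_mul (h₂ 0 / 2))).add
        (((hasDerivAt_id s).pow 3).const_mul K)) using 1
      simp; ring) (by simp) e1
  have := e0 1 ⟨zero_le_one, le_rfl⟩
  simp at this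
  linarith

lemma abs_taylor_two_le {h h₁ h₂ h₃ : ℝ → ℝ} {K : ℝ} (hh : ∀ s, HasDerivAt h (h₁ s) s)
    (hh₁ : ∀ s, HasDerivAt h₁ (h₂ s) s) (hh₂ : ∀ s, HasDerivAt h₂ (h₃ s) s)
    (hK : ∀ s, |h₃ s| ≤ 6 * K) : |h 1 - (h 0 + h₁ 0 + h₂ 0 / 2)| ≤ K := by
  refine abs_le.2 ⟨?_, taylor_two_le hh hh₁ hh₂ fun s => (abs_le.1 (hK s)).2⟩
  have := taylor_two_le (K := K) (fun s => (hh s).neg) (fun s => (hh₁ s).neg)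
    (fun s => (hh₂ s).neg) fun s => by linarith [(abs_le.1 (hK s)).1]
  simp only [Pi.neg_apply] at this
  linarith

lemma sum_exp_pos [Nonempty ι] (x : ι → ℝ) : 0 < ∑ i, exp (x i) :=
  Finset.sum_pos (fun _ _ => exp_pos _) Finset.univ_nonempty

lemma softmax_nonneg (x : ι → ℝ) (i : ι) : 0 ≤ softmax x i := by
  unfold softmax; positivity

lemma sum_softmax [Nonempty ι] (x : ι → ℝ) : ∑ i, softmax x i = 1 := by
  simp only [softmax, ← Finset.sum_div]
  exact div_self (sum_exp_pos x).ne'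

lemma hasDerivAt_sum_pow_mul_exp (w y : ι → ℝ) (k : ℕ) (s : ℝ) :
    HasDerivAt (fun s => ∑ i, y i ^ k * exp (w i + s * y i))
      (∑ i, y i ^ (k + 1) * exp (w i + s * y i)) s := by
  refine HasDerivAt.fun_sum fun i _ => ?_
  convert! ((((hasDerivAt_id s).mul_const (y i)).const_add (w i)).exp).const_mul (y i ^ k) using 1
  simp only [id]; ring

lemma abs_sum_softmax_mul_le [Nonempty ι] (x z : ι → ℝ) {M : ℝ} (hM : ∀ i, |z i| ≤ M) :
    |∑ i, softmax x i * z i| ≤ M := by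
  calc |∑ i, softmax x i * z i| ≤ ∑ i, |softmax x i * z i| := Finset.abs_sum_le_sum_abs _ _
    _ ≤ ∑ i, softmax x i * M := Finset.sum_le_sum fun i _ => by
        rw [abs_mul, abs_of_nonneg (softmax_nonneg x i)]
        exact mul_le_mul_of_nonneg_left (hM i) (softmax_nonneg x i)
    _ = M := by rw [← Finset.sum_mul, sum_softmax, one_mul]

/-- Second-order Taylor expansion of `logSumExp` with a third-order remainder that is uniform in
the base point. -/
lemma abs_logSumExp_add_sub_le [Nonempty ι] (w y : ι → ℝ) :
    |logSumExp (w + y) - (logSumExp w + ∑ i, softmax w i * y i +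
      (∑ i, softmax w i * y i ^ 2 - (∑ i, softmax w i * y i) ^ 2) / 2)| ≤ ‖y‖ ^ 3 := by
  set S : ℕ → ℝ → ℝ := fun k s => ∑ i, y i ^ k * exp (w i + s * y i) with hS
  set m : ℕ → ℝ → ℝ := fun k s => S k s / S 0 s with hm
  have hS0 : ∀ s, S 0 s ≠ 0 := fun s => by
    simpa [hS] using (sum_exp_pos fun i => w i + s * y i).ne'
  have hdS : ∀ k s, HasDerivAt (S k) (S (k + 1) s) s := fun k s =>
    hasDerivAt_sum_pow_mul_exp w y k s
  have hdm : ∀ k s, HasDerivAt (m k) (m (k + 1) s - m k s * m 1 s) s := fun k s => by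
    convert! (hdS k s).div (hdS 0 s) (hS0 s) using 1
    simp only [hm]
    field_simp [hS0 s]
  have hmeq : ∀ k s, m k s = ∑ i, softmax (fun i => w i + s * y i) i * y i ^ k := fun k s => by
    simp only [hm, hS, softmax, Finset.sum_div]
    refine Finset.sum_congr rfl fun i _ => ?_
    simp; ring
  have hmle : ∀ k s, |m k s| ≤ ‖y‖ ^ k := fun k s => by
    rw [hmeq]
    refine abs_sum_softmax_mul_le _ _ fun i => ?_
    rw [abs_pow]
    exact pow_le_pow_left₀ (abs_nonneg _) (norm_le_pi_norm y i) k
  have key := abs_taylor_two_le (h := fun s => log (S 0 s)) (h₁ := m 1)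
    (h₂ := fun s => m 2 s - m 1 s * m 1 s)
    (h₃ := fun s => (m 3 s - m 2 s * m 1 s) -
      ((m 2 s - m 1 s * m 1 s) * m 1 s + m 1 s * (m 2 s - m 1 s * m 1 s))) (K := ‖y‖ ^ 3)
    (fun s => (hdS 0 s).log (hS0 s)) (fun s => hdm 1 s)
    (fun s => (hdm 2 s).sub ((hdm 1 s).mul (hdm 1 s))) (fun s => by
      have h1 := hmle 1 s
      have h2 := hmle 2 s
      have h3 := hmle 3 s
      rw [pow_one] at h1
      have h21 : |m 2 s * m 1 s| ≤ ‖y‖ ^ 3 := by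
        rw [abs_mul]
        calc _ ≤ ‖y‖ ^ 2 * ‖y‖ := by gcongr
          _ = _ := by ring
      have h111 : |m 1 s ^ 3| ≤ ‖y‖ ^ 3 := by
        rw [abs_pow]
        gcongr
      rw [abs_le] at *
      constructor <;> nlinarith)
  have a0 : S 0 0 = ∑ i, exp (w i) := by simp [hS]
  have a1 : S 0 1 = ∑ i, exp ((w + y) i) := by simp [hS]
  simp only [hmeq, a0, a1, zero_mul, add_zero, pow_one] at key
  rw [pow_two (∑ i, softmax w i * y i)]
  exact key

lemma sum_softmax_variance [Nonempty ι] (x y : ι → ℝ) :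
    ∑ i, softmax x i * y i ^ 2 - (∑ i, softmax x i * y i) ^ 2 =
      (∑ i, ∑ j, softmax x i * softmax x j * (y i - y j) ^ 2) / 2 := by
  have h1 := sum_softmax x
  have : ∑ i, ∑ j, softmax x i * softmax x j * (y i - y j) ^ 2 =
      (∑ i, softmax x i * y i ^ 2) * (∑ j, softmax x j)
      + (∑ i, softmax x i) * (∑ j, softmax x j * y j ^ 2)
      - 2 * ((∑ i, softmax x i * y i) * (∑ j, softmax x j * y j)) := by
    rw [Finset.sum_mul_sum, Finset.sum_mul_sum, Finset.sum_mul_sum]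
    simp only [Finset.mul_sum, ← Finset.sum_add_distrib,
      ← Finset.sum_sub_distrib]
    exact Finset.sum_congr rfl fun i _ => Finset.sum_congr rfl fun j _ => by ring
  rw [this, h1]; ring

lemma le_logSumExp (x : ι → ℝ) (i : ι) : x i ≤ logSumExp x := by
  rw [logSumExp, le_log_iff_exp_le]
  · exact Finset.single_le_sum (f := fun i => exp (x i)) (fun j _ => (exp_pos _).le)
      (Finset.mem_univ i)
  · have : Nonempty ι := ⟨i⟩
    exact sum_exp_pos x

lemma logSumExp_le [Nonempty ι] (x : ι → ℝ) {M : ℝ} (hM : ∀ i, x i ≤ M) :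
    logSumExp x ≤ M + log (Fintype.card ι) := by
  have hc : (0 : ℝ) < Fintype.card ι := by exact_mod_cast Fintype.card_pos
  rw [logSumExp, log_le_iff_le_exp (sum_exp_pos x), exp_add, exp_log hc]
  calc ∑ i, exp (x i) ≤ ∑ _i : ι, exp M := Finset.sum_le_sum fun i _ => exp_le_exp.2 (hM i)
    _ = _ := by simp [mul_comm]

lemma abs_logSumExp_le [Nonempty ι] (x : ι → ℝ) :
    |logSumExp x| ≤ ‖x‖ + log (Fintype.card ι) := by
  have hx : ∀ i, |x i| ≤ ‖x‖ := fun i => norm_le_pi_norm x i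
  have hc : 0 ≤ log (Fintype.card ι) := log_natCast_nonneg _
  obtain ⟨i⟩ := ‹Nonempty ι›
  exact abs_le.2 ⟨by linarith [le_logSumExp x i, (abs_le.1 (hx i)).1],
    logSumExp_le x fun i => (abs_le.1 (hx i)).2⟩

lemma measurable_logSumExp : Measurable (logSumExp : (ι → ℝ) → ℝ) := by
  unfold logSumExp; fun_prop

end LogSumExp

section Comparison

variable {ι : Type*}

/-- The image of a measure under the dilation `x ↦ a • x`. -/
abbrev dilate (P : Measure (ι → ℝ)) (a : ℝ) : Measure (ι → ℝ) :=
  P.map (a • ContinuousLinearMap.id ℝ (ι → ℝ))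

lemma dilate_one (P : Measure (ι → ℝ)) : dilate P 1 = P := by
  simp [dilate]

lemma dilate_zero (P : Measure (ι → ℝ)) [IsProbabilityMeasure P] :
    dilate P 0 = Measure.dirac 0 := by
  have : (⇑((0 : ℝ) • ContinuousLinearMap.id ℝ (ι → ℝ)) : (ι → ℝ) → ι → ℝ) = fun _ => 0 := by
    ext; simp
  rw [dilate, this, Measure.map_const]
  simp

lemma integral_eval_eq_zero {P : Measure (ι → ℝ)}
    (hP : ∀ L : StrongDual ℝ (ι → ℝ), P[L] = 0) (i : ι) : ∫ y, y i ∂P = 0 :=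
  hP (ContinuousLinearMap.proj (R := ℝ) (φ := fun _ => ℝ) i)

variable [Fintype ι]

lemma integral_dilate (P : Measure (ι → ℝ)) (a : ℝ) {f : (ι → ℝ) → ℝ} (hf : Measurable f) :
    ∫ x, f x ∂(dilate P a) = ∫ x, f (a • x) ∂P := by
  rw [dilate, integral_map (by fun_prop) hf.aestronglyMeasurable]
  rfl

lemma charFunDual_dilate {P : Measure (ι → ℝ)} [IsGaussian P]
    (hP : ∀ L : StrongDual ℝ (ι → ℝ), P[L] = 0) (a : ℝ) (L : StrongDual ℝ (ι → ℝ)) :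
    charFunDual (dilate P a) L = Complex.exp (-(a ^ 2 * Var[L; P] : ℝ) / 2) := by
  have h : L.comp (a • ContinuousLinearMap.id ℝ (ι → ℝ)) = a • L := by ext; simp
  rw [dilate, charFunDual_map, h, IsGaussian.charFunDual_eq_of_forall_strongDual_eq_zero hP]
  have : Var[⇑(a • L); P] = a ^ 2 * Var[L; P] := by
    rw [FunLike.coe_smul, variance_smul]
  rw [this]

lemma dilate_conv_dilate {P : Measure (ι → ℝ)} [IsGaussian P]
    (hP : ∀ L : StrongDual ℝ (ι → ℝ), P[L] = 0) {a b c : ℝ} (h : a ^ 2 + b ^ 2 = c ^ 2) :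
    dilate P a ∗ dilate P b = dilate P c := by
  refine Measure.ext_of_charFunDual (funext fun L => ?_)
  rw [charFunDual_conv, charFunDual_dilate hP, charFunDual_dilate hP, charFunDual_dilate hP,
    ← Complex.exp_add, ← h]
  congr 1
  push_cast
  ring

lemma integrable_norm_pow (P : Measure (ι → ℝ)) [IsGaussian P] (k : ℕ) :
    Integrable (fun y => ‖y‖ ^ k) P := by
  have := (IsGaussian.memLp_id P (k : ENNReal) (by simp)).integrable_norm_pow'
  simpa using this

lemma integrable_eval (P : Measure (ι → ℝ)) [IsGaussian P] (i : ι) :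
    Integrable (fun y => y i) P :=
  IsGaussian.integrable_dual P (ContinuousLinearMap.proj (R := ℝ) (φ := fun _ => ℝ) i)

lemma integrable_eval_sub_sq (P : Measure (ι → ℝ)) [IsGaussian P] (i j : ι) :
    Integrable (fun y => (y i - y j) ^ 2) P :=
  (IsGaussian.memLp_dual P (ContinuousLinearMap.proj (R := ℝ) (φ := fun _ => ℝ) i -
    ContinuousLinearMap.proj (R := ℝ) (φ := fun _ => ℝ) j) 2 (by simp)).integrable_sq

lemma integrable_logSumExp [Nonempty ι] (P : Measure (ι → ℝ)) [IsGaussian P] :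
    Integrable logSumExp P := by
  refine Integrable.mono' (g := fun y => ‖y‖ ^ 1 + log (Fintype.card ι))
    ((integrable_norm_pow P 1).add (integrable_const _))
    measurable_logSumExp.aestronglyMeasurable (ae_of_all _ fun y => ?_)
  simpa using abs_logSumExp_le y

lemma integrable_logSumExp_add [Nonempty ι] (P : Measure (ι → ℝ)) [IsGaussian P] (w : ι → ℝ)
    (a : ℝ) : Integrable (fun y => logSumExp (w + a • y)) P := by
  refine Integrable.mono' (g := fun y => ‖w‖ + |a| * ‖y‖ ^ 1 + log (Fintype.card ι))
    (((integrable_const _).add ((integrable_norm_pow P 1).const_mul _)).add (integrable_const _))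
    (measurable_logSumExp.comp (by fun_prop)).aestronglyMeasurable (ae_of_all _ fun y => ?_)
  refine (abs_logSumExp_le (w + a • y)).trans ?_
  have := norm_add_le w (a • y)
  rw [norm_smul, Real.norm_eq_abs] at this
  rw [pow_one]
  linarith

lemma abs_integral_logSumExp_add_sub_le [Nonempty ι] {P : Measure (ι → ℝ)} [IsGaussian P]
    (hP : ∀ L : StrongDual ℝ (ι → ℝ), P[L] = 0) (w : ι → ℝ) {a : ℝ} (ha : 0 ≤ a) :
    |∫ y, logSumExp (w + a • y) ∂P - (logSumExp w + a ^ 2 / 4 *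
      ∑ i, ∑ j, softmax w i * softmax w j * ∫ y, (y i - y j) ^ 2 ∂P)| ≤
      a ^ 3 * ∫ y, ‖y‖ ^ 3 ∂P := by
  have hlin : Integrable (fun y : ι → ℝ => a * ∑ i, softmax w i * y i) P :=
    (integrable_finsetSum _ fun i _ => (integrable_eval P i).const_mul _).const_mul _
  have hquad : Integrable (fun y : ι → ℝ => a ^ 2 / 4 *
      ∑ i, ∑ j, softmax w i * softmax w j * (y i - y j) ^ 2) P :=
    (integrable_finsetSum _ fun i _ => integrable_finsetSum _ fun j _ =>
      (integrable_eval_sub_sq P i j).const_mul _).const_mul _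
  have hadd : Integrable (fun y : ι → ℝ => logSumExp w + a * ∑ i, softmax w i * y i) P :=
    (integrable_const _).add hlin
  have hsum : Integrable (fun y : ι → ℝ => logSumExp w + a * ∑ i, softmax w i * y i + a ^ 2 / 4 *
      ∑ i, ∑ j, softmax w i * softmax w j * (y i - y j) ^ 2) P := hadd.add hquad
  have hmean : ∫ y, (logSumExp w + a * ∑ i, softmax w i * y i + a ^ 2 / 4 *
      ∑ i, ∑ j, softmax w i * softmax w j * (y i - y j) ^ 2) ∂P =
      logSumExp w + a ^ 2 / 4 *
      ∑ i, ∑ j, softmax w i * softmax w j * ∫ y, (y i - y j) ^ 2 ∂P := by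
    rw [integral_add hadd hquad,
      integral_add (integrable_const _) hlin, integral_const_mul, integral_const_mul,
      integral_finsetSum _ fun i _ => (integrable_eval P i).const_mul _,
      integral_finsetSum _ fun i _ => integrable_finsetSum _ fun j _ =>
      (integrable_eval_sub_sq P i j).const_mul _]
    simp_rw [integral_const_mul, integral_eval_eq_zero hP]
    congr 1
    · simp
    · congr 1
      refine Finset.sum_congr rfl fun i _ => ?_
      rw [integral_finsetSum _ fun j _ => (integrable_eval_sub_sq P i j).const_mul _]
      simp_rw [integral_const_mul]
  rw [← hmean, ← integral_sub (integrable_logSumExp_add P w a) hsum,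
    ← integral_const_mul]
  rw [← Real.norm_eq_abs]
  refine norm_integral_le_of_norm_le ((integrable_norm_pow P 3).const_mul _)
    (ae_of_all _ fun y => ?_)
  have key := abs_logSumExp_add_sub_le w (a • y)
  rw [sum_softmax_variance, norm_smul, mul_pow, Real.norm_of_nonneg ha] at key
  refine le_trans (le_of_eq ?_) key
  rw [Real.norm_eq_abs]
  congr 2
  simp only [Pi.smul_apply, smul_eq_mul, ← mul_sub, mul_pow, add_assoc]
  congr 2
  · rw [Finset.mul_sum]
    exact Finset.sum_congr rfl fun i _ => by ring
  · simp only [Finset.mul_sum, Finset.sum_div]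
    exact Finset.sum_congr rfl fun i _ => Finset.sum_congr rfl fun j _ => by ring

lemma integral_logSumExp_conv_dilate [Nonempty ι] (W P : Measure (ι → ℝ)) [IsGaussian W]
    [IsGaussian P] (a : ℝ) :
    ∫ x, logSumExp x ∂(W ∗ dilate P a) = ∫ w, ∫ y, logSumExp (w + a • y) ∂P ∂W := by
  rw [integral_conv (integrable_logSumExp (W ∗ dilate P a))]
  refine integral_congr_ae (ae_of_all _ fun w => ?_)
  exact integral_dilate P a (measurable_logSumExp.comp (measurable_const_add w))

lemma integrable_integral_logSumExp [Nonempty ι] (W P : Measure (ι → ℝ)) [IsGaussian W]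
    [IsGaussian P] (a : ℝ) : Integrable (fun w => ∫ y, logSumExp (w + a • y) ∂P) W := by
  have h : Integrable logSumExp (W ∗ dilate P a) := integrable_logSumExp _
  have h2 := ((integrable_map_measure measurable_logSumExp.aestronglyMeasurable
    (by fun_prop)).1 h).integral_prod_left
  refine h2.congr (ae_of_all _ fun w => ?_)
  exact integral_dilate P a (measurable_logSumExp.comp (measurable_const_add w))

/-- Exchanging a small independent Gaussian increment `a • P` for `a • Q` decreases the expected
`logSumExp` by at most `O(a ^ 3)`. -/
lemma integral_logSumExp_conv_dilate_le [Nonempty ι] (W : Measure (ι → ℝ)) {P Q : Measure (ι → ℝ)}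
    [IsGaussian W] [IsGaussian P] [IsGaussian Q]
    (hP : ∀ L : StrongDual ℝ (ι → ℝ), P[L] = 0) (hQ : ∀ L : StrongDual ℝ (ι → ℝ), Q[L] = 0)
    (hPQ : ∀ i j, ∫ y, (y i - y j) ^ 2 ∂P ≤ ∫ y, (y i - y j) ^ 2 ∂Q) {a : ℝ} (ha : 0 ≤ a) :
    ∫ x, logSumExp x ∂(W ∗ dilate P a) ≤ ∫ x, logSumExp x ∂(W ∗ dilate Q a) +
      a ^ 3 * (∫ y, ‖y‖ ^ 3 ∂P + ∫ y, ‖y‖ ^ 3 ∂Q) := by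
  rw [integral_logSumExp_conv_dilate, integral_logSumExp_conv_dilate]
  have hpt : ∀ w, ∫ y, logSumExp (w + a • y) ∂P ≤ ∫ y, logSumExp (w + a • y) ∂Q +
      a ^ 3 * (∫ y, ‖y‖ ^ 3 ∂P + ∫ y, ‖y‖ ^ 3 ∂Q) := fun w => by
    have h1 := (abs_le.1 (abs_integral_logSumExp_add_sub_le hP w ha)).2
    have h2 := (abs_le.1 (abs_integral_logSumExp_add_sub_le hQ w ha)).1
    have h3 : a ^ 2 / 4 * ∑ i, ∑ j, softmax w i * softmax w j * ∫ y, (y i - y j) ^ 2 ∂P ≤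
        a ^ 2 / 4 * ∑ i, ∑ j, softmax w i * softmax w j * ∫ y, (y i - y j) ^ 2 ∂Q := by
      refine mul_le_mul_of_nonneg_left (Finset.sum_le_sum fun i _ => Finset.sum_le_sum fun j _ =>
        mul_le_mul_of_nonneg_left (hPQ i j) ?_) (by positivity)
      exact mul_nonneg (softmax_nonneg _ _) (softmax_nonneg _ _)
    linarith
  have hQi := integrable_integral_logSumExp W Q a
  refine (integral_mono (integrable_integral_logSumExp W P a)
    (hQi.add (integrable_const _)) hpt).trans (le_of_eq ?_)
  rw [Pi.add_def, integral_add hQi (integrable_const _)]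
  simp

/-- Gaussian comparison for `logSumExp`: larger increments give a larger expectation. -/
theorem integral_logSumExp_le [Nonempty ι] {P Q : Measure (ι → ℝ)} [IsGaussian P] [IsGaussian Q]
    (hP : ∀ L : StrongDual ℝ (ι → ℝ), P[L] = 0) (hQ : ∀ L : StrongDual ℝ (ι → ℝ), Q[L] = 0)
    (hPQ : ∀ i j, ∫ y, (y i - y j) ^ 2 ∂P ≤ ∫ y, (y i - y j) ^ 2 ∂Q) :
    ∫ x, logSumExp x ∂P ≤ ∫ x, logSumExp x ∂Q := by
  set K := ∫ y, ‖y‖ ^ 3 ∂P + ∫ y, ‖y‖ ^ 3 ∂Q with hK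
  have main : ∀ N : ℕ, 0 < N → ∫ x, logSumExp x ∂P ≤ ∫ x, logSumExp x ∂Q + √(1 / N) * K := by
    intro N hN
    have hN' : (0 : ℝ) < N := by exact_mod_cast hN
    have hind : ∀ k : ℕ, k ≤ N → ∫ x, logSumExp x ∂P ≤
        ∫ x, logSumExp x ∂(dilate P √((N - k) / N) ∗ dilate Q √(k / N)) +
          k * (√(1 / N) ^ 3 * K) := by
      intro k
      induction k with
      | zero =>
        intro _
        simp [hN'.ne', dilate_one, dilate_zero]
      | succ k ih =>
        intro hk
        refine (ih (by omega)).trans ?_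
        have hk' : (k : ℝ) + 1 ≤ N := by exact_mod_cast hk
        have eP : dilate P √((N - k) / N) =
            dilate P √((N - (k + 1 : ℕ)) / N) ∗ dilate P √(1 / N) := by
          refine (dilate_conv_dilate hP ?_).symm
          rw [sq_sqrt (div_nonneg (by push_cast; linarith) hN'.le), sq_sqrt (by positivity),
            sq_sqrt (div_nonneg (by linarith) hN'.le)]
          push_cast
          field_simp
          ring
        have eQ : dilate Q √((k + 1 : ℕ) / N) = dilate Q √(k / N) ∗ dilate Q √(1 / N) := by
          refine (dilate_conv_dilate hQ ?_).symm
          rw [sq_sqrt (by positivity), sq_sqrt (by positivity), sq_sqrt (by positivity)]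
          push_cast
          field_simp
        have := integral_logSumExp_conv_dilate_le
          (dilate P √((N - (k + 1 : ℕ)) / N) ∗ dilate Q √(k / N)) hP hQ hPQ
          (sqrt_nonneg (1 / (N : ℝ)))
        rw [Measure.conv_assoc, Measure.conv_comm (dilate Q √(k / N)) (dilate P _),
          ← Measure.conv_assoc, ← eP, Measure.conv_assoc, ← eQ] at this
        push_cast at this ⊢
        linarith
    refine (hind N le_rfl).trans (le_of_eq ?_)
    have : (N : ℝ) * (√(1 / N) ^ 3 * K) = √(1 / N) * K := by
      rw [pow_succ, sq_sqrt (by positivity)]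
      field_simp
    rw [this]
    simp [hN'.ne', dilate_one, dilate_zero]
  have hlim : Tendsto (fun N : ℕ => ∫ x, logSumExp x ∂Q + √(1 / N) * K) atTop
      (𝓝 (∫ x, logSumExp x ∂Q + √0 * K)) :=
    ((tendsto_one_div_atTop_nhds_zero_nat.sqrt).mul_const K).const_add _
  rw [sqrt_zero, zero_mul, add_zero] at hlim
  exact ge_of_tendsto hlim ((eventually_gt_atTop 0).mono main)

lemma abs_iSup_le_norm (x : ι → ℝ) : |⨆ i, x i| ≤ ‖x‖ := by
  rcases isEmpty_or_nonempty ι with h | h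
  · simp
  have hx : ∀ i, |x i| ≤ ‖x‖ := fun i => norm_le_pi_norm x i
  obtain ⟨i⟩ := h
  have : Nonempty ι := ⟨i⟩
  exact abs_le.2 ⟨(abs_le.1 (hx i)).1.trans (le_ciSup (Finite.bddAbove_range x) i),
    ciSup_le fun i => (abs_le.1 (hx i)).2⟩

lemma measurable_iSup_eval : Measurable (fun x : ι → ℝ => ⨆ i, x i) :=
  Measurable.iSup fun i => measurable_pi_apply i

lemma integrable_iSup_eval (P : Measure (ι → ℝ)) [IsGaussian P] :
    Integrable (fun x => ⨆ i, x i) P :=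
  Integrable.mono' (integrable_norm_pow P 1) measurable_iSup_eval.aestronglyMeasurable
    (ae_of_all _ fun y => by simpa using abs_iSup_le_norm y)

/-- The **Sudakov–Fernique inequality**. -/
theorem integral_iSup_le_of_integral_sub_sq_le [Nonempty ι] {P Q : Measure (ι → ℝ)}
    [IsGaussian P] [IsGaussian Q]
    (hP : ∀ L : StrongDual ℝ (ι → ℝ), P[L] = 0) (hQ : ∀ L : StrongDual ℝ (ι → ℝ), Q[L] = 0)
    (hPQ : ∀ i j, ∫ y, (y i - y j) ^ 2 ∂P ≤ ∫ y, (y i - y j) ^ 2 ∂Q) :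
    ∫ x, ⨆ i, x i ∂P ≤ ∫ x, ⨆ i, x i ∂Q := by
  have hdil : ∀ {R : Measure (ι → ℝ)} [IsGaussian R], (∀ L : StrongDual ℝ (ι → ℝ), R[L] = 0) →
      ∀ b : ℝ, ∀ L : StrongDual ℝ (ι → ℝ), (dilate R b)[L] = 0 := by
    intro R _ hR b L
    rw [integral_dilate R b L.measurable]
    simp only [map_smul, integral_smul, hR L, smul_zero]
  have main : ∀ b : ℕ, 0 < b →
      ∫ x, ⨆ i, x i ∂P ≤ ∫ x, ⨆ i, x i ∂Q + log (Fintype.card ι) * (1 / b) := by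
    intro b hb
    have hb' : (0 : ℝ) < b := by exact_mod_cast hb
    have h := integral_logSumExp_le (hdil hP b) (hdil hQ b) fun i j => by
      rw [integral_dilate P b (by fun_prop), integral_dilate Q b (by fun_prop)]
      simp only [Pi.smul_apply, smul_eq_mul, ← mul_sub, mul_pow, integral_const_mul]
      exact mul_le_mul_of_nonneg_left (hPQ i j) (by positivity)
    rw [integral_dilate P b measurable_logSumExp, integral_dilate Q b measurable_logSumExp] at h
    have hintg : ∀ (R : Measure (ι → ℝ)) [IsGaussian R],
        Integrable (fun x => logSumExp ((b : ℝ) • x)) R := fun R _ => by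
      simpa using integrable_logSumExp_add R 0 b
    have h1 : b * ∫ x, ⨆ i, x i ∂P ≤ ∫ x, logSumExp ((b : ℝ) • x) ∂P := by
      rw [← integral_const_mul]
      refine integral_mono ((integrable_iSup_eval P).const_mul _) (hintg P) fun x => ?_
      simp only
      rw [Real.mul_iSup_of_nonneg hb'.le]
      exact ciSup_le fun i => le_logSumExp ((b : ℝ) • x) i
    have h2 : ∫ x, logSumExp ((b : ℝ) • x) ∂Q ≤
        b * ∫ x, ⨆ i, x i ∂Q + log (Fintype.card ι) := by
      have hi := (integrable_iSup_eval Q).const_mul (b : ℝ)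
      calc ∫ x, logSumExp ((b : ℝ) • x) ∂Q
          ≤ ∫ x, (b * ⨆ i, x i) + log (Fintype.card ι) ∂Q := by
            refine integral_mono (hintg Q) (hi.add (integrable_const _)) fun x => ?_
            refine logSumExp_le _ fun i => ?_
            exact mul_le_mul_of_nonneg_left (le_ciSup (Finite.bddAbove_range x) i) hb'.le
        _ = _ := by
            rw [integral_add hi (integrable_const _), integral_const_mul]
            simp
    have h3 := h1.trans (h.trans h2)
    have : b * (∫ x, ⨆ i, x i ∂Q + log (Fintype.card ι) * (1 / b)) =
        b * ∫ x, ⨆ i, x i ∂Q + log (Fintype.card ι) := by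
      field_simp
    exact le_of_mul_le_mul_left (h3.trans this.ge) hb'
  have hlim : Tendsto (fun b : ℕ => ∫ x, ⨆ i, x i ∂Q + log (Fintype.card ι) * (1 / (b : ℝ))) atTop
      (𝓝 (∫ x, ⨆ i, x i ∂Q + log (Fintype.card ι) * 0)) :=
    (tendsto_one_div_atTop_nhds_zero_nat.const_mul _).const_add _
  rw [mul_zero, add_zero] at hlim
  exact ge_of_tendsto hlim ((eventually_gt_atTop 0).mono main)

end Comparison

section GaussianProcess

variable {Ω : Type} [MeasurableSpace Ω] {μ : Measure Ω} {S : Set ℝ}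
  {X : ℝ → Ω → ℝ}

lemma IsCenteredGaussianOn.map_sub_eq (hX : IsCenteredGaussianOn μ X S) {s t : ℝ} (hs : s ∈ S)
    (ht : t ∈ S) : ∃ v : NNReal, μ.map (fun ω => X s ω - X t ω) = gaussianReal 0 v := by
  obtain ⟨v, hv⟩ := hX.2 2 ![1, -1] ![s, t] (by simp [Fin.forall_fin_two, hs, ht])
  refine ⟨v, ?_⟩
  rw [← hv]
  congr 1
  ext ω
  simp [sub_eq_add_neg]

lemma IsCenteredGaussianOn.memLp (hX : IsCenteredGaussianOn μ X S) {t : ℝ} (ht : t ∈ S)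
    (p : NNReal) : MemLp (X t) p μ := by
  obtain ⟨v, hv⟩ := hX.2 1 ![1] ![t] (by simp [ht])
  have h : μ.map (X t) = gaussianReal 0 v := by
    rw [← hv]
    congr 1
    ext ω
    simp
  have := memLp_id_gaussianReal (μ := 0) (v := v) p
  rw [← h, memLp_map_measure_iff (by fun_prop) (hX.1 t ht).aemeasurable] at this
  exact this

/-- The joint law of finitely many values of a process. -/
def finiteLaw (μ : Measure Ω) (X : ℝ → Ω → ℝ) {k : ℕ} (ts : Fin k → ℝ) : Measure (Fin k → ℝ) :=
  μ.map fun ω i => X (ts i) ω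

lemma IsCenteredGaussianOn.measurable_vector (hX : IsCenteredGaussianOn μ X S) {k : ℕ}
    {ts : Fin k → ℝ} (hts : ∀ i, ts i ∈ S) : Measurable fun ω i => X (ts i) ω :=
  measurable_pi_lambda _ fun i => hX.1 _ (hts i)

lemma IsCenteredGaussianOn.map_finiteLaw (hX : IsCenteredGaussianOn μ X S) {k : ℕ}
    {ts : Fin k → ℝ} (hts : ∀ i, ts i ∈ S) (L : StrongDual ℝ (Fin k → ℝ)) :
    ∃ v : NNReal, (finiteLaw μ X ts).map L = gaussianReal 0 v := by
  obtain ⟨v, hv⟩ := hX.2 k (fun i => L (Pi.single i 1)) ts hts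
  refine ⟨v, ?_⟩
  rw [finiteLaw, Measure.map_map (by fun_prop) (hX.measurable_vector hts), ← hv]
  congr 1
  ext ω
  simp only [Function.comp_apply]
  conv_lhs => rw [pi_eq_sum_univ' (fun i => X (ts i) ω), map_sum]
  refine Finset.sum_congr rfl fun i _ => ?_
  rw [map_smul, smul_eq_mul, mul_comm]

lemma IsCenteredGaussianOn.isGaussian_finiteLaw (hX : IsCenteredGaussianOn μ X S) {k : ℕ}
    {ts : Fin k → ℝ} (hts : ∀ i, ts i ∈ S) : IsGaussian (finiteLaw μ X ts) :=
  isGaussian_of_map_eq_gaussianReal fun L => ⟨0, hX.map_finiteLaw hts L⟩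

lemma IsCenteredGaussianOn.integral_finiteLaw (hX : IsCenteredGaussianOn μ X S) {k : ℕ}
    {ts : Fin k → ℝ} (hts : ∀ i, ts i ∈ S) (L : StrongDual ℝ (Fin k → ℝ)) :
    (finiteLaw μ X ts)[L] = 0 := by
  obtain ⟨v, hv⟩ := hX.map_finiteLaw hts L
  have h : ∫ x, x ∂((finiteLaw μ X ts).map L) = (finiteLaw μ X ts)[L] :=
    integral_map (by fun_prop) (by fun_prop)
  rw [← h, hv, integral_id_gaussianReal]

end GaussianProcess

lemma le_add_mul_div_pow {y r : ℝ} (hy : 0 ≤ y) (hr : 0 < r) {p : ℕ} (hp : p ≠ 0) :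
    y ≤ r + r / r ^ p * y ^ p := by
  obtain ⟨u, rfl⟩ : ∃ u, y = r * u := ⟨y / r, by field_simp⟩
  have hu : 0 ≤ u := nonneg_of_mul_nonneg_right hy hr
  have h : u ≤ 1 + u ^ p := by
    rcases le_total u 1 with h | h
    · linarith [pow_nonneg hu p]
    · linarith [le_self_pow₀ h hp]
  have e : r / r ^ p * (r * u) ^ p = r * u ^ p := by
    rw [mul_pow]; field_simp
  rw [e]
  nlinarith

section Grid

/-- Points of the regular grid of mesh `1 / n` on `[0, 1]`. -/
def gridPoint (n : ℕ) (i : Fin (n + 1)) : ℝ := ((i : ℕ) : ℝ) / (n : ℝ)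

lemma gridPoint_nonneg (n : ℕ) (i : Fin (n + 1)) : 0 ≤ gridPoint n i := by
  unfold gridPoint; positivity

lemma gridPoint_le_one (n : ℕ) (i : Fin (n + 1)) : gridPoint n i ≤ 1 :=
  div_le_one_of_le₀ (by exact_mod_cast Nat.lt_succ_iff.1 i.2) (by positivity)

lemma iSup_gridPoint_le_iSup {x : ℝ → ℝ} (hx : ContinuousOn x (Ici 0)) (n : ℕ) :
    ⨆ i, x (gridPoint n i) ≤ ⨆ t : Icc (0 : ℝ) 1, x t := by
  have hb : BddAbove (range fun t : Icc (0 : ℝ) 1 => x t) := by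
    have := (isCompact_Icc.image_of_continuousOn (hx.mono
      (fun t (ht : t ∈ Icc (0 : ℝ) 1) => ht.1))).bddAbove
    rwa [image_eq_range] at this
  exact ciSup_le fun i => le_ciSup hb ⟨gridPoint n i, gridPoint_nonneg n i, gridPoint_le_one n i⟩

lemma tendsto_iSup_gridPoint {x : ℝ → ℝ} (hx : ContinuousOn x (Ici 0)) :
    Tendsto (fun k : ℕ => ⨆ i, x (gridPoint (2 ^ k) i)) atTop
      (𝓝 (⨆ t : Icc (0 : ℝ) 1, x t)) := by
  obtain ⟨t, ht, hmax⟩ := isCompact_Icc.exists_isMaxOn (nonempty_Icc.2 zero_le_one)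
    (hx.mono (fun t (ht : t ∈ Icc (0 : ℝ) 1) => ht.1))
  have hsup : ⨆ t : Icc (0 : ℝ) 1, x t = x t :=
    le_antisymm (ciSup_le fun s => hmax s.2) (le_ciSup
      (f := fun t : Icc (0 : ℝ) 1 => x t) ⟨x t, by rintro _ ⟨s, rfl⟩; exact hmax s.2⟩ ⟨t, ht⟩)
  have hfloor : Tendsto (fun k : ℕ => (⌊t * (2 ^ k : ℝ)⌋₊ : ℝ) / 2 ^ k) atTop (𝓝[Ici 0] t) :=
    tendsto_nhdsWithin_iff.2 ⟨(tendsto_nat_floor_mul_div_atTop ht.1).comp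
      (tendsto_pow_atTop_atTop_of_one_lt one_lt_two),
      Eventually.of_forall fun k => by simp only [mem_Ici]; positivity⟩
  have hlow := (hx t ht.1).tendsto.comp hfloor
  rw [hsup]
  refine tendsto_of_tendsto_of_tendsto_of_le_of_le hlow tendsto_const_nhds (fun k => ?_)
    fun k => (iSup_gridPoint_le_iSup hx _).trans hsup.le
  have hlt : ⌊t * (2 ^ k : ℝ)⌋₊ < 2 ^ k + 1 := by
    refine Nat.lt_succ_iff.2 (Nat.floor_le_of_le ?_)
    push_cast
    exact mul_le_of_le_one_left (by positivity) ht.2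
  have := le_ciSup (Finite.bddAbove_range fun i => x (gridPoint (2 ^ k) i)) ⟨_, hlt⟩
  simpa [gridPoint] using this

/-- Refinement step of dyadic chaining. -/
lemma abs_dyadic_succ_le {x : ℝ → ℝ} {k : ℕ} {U r : ℝ} (hr : 0 < r) {p : ℕ} (hp : p ≠ 0)
    (hU : ∀ i ≤ 2 ^ k, |x ((i : ℕ) / 2 ^ k)| ≤ U) {i : ℕ} (hi : i ≤ 2 ^ (k + 1)) :
    |x (i / 2 ^ (k + 1))| ≤ U + (r + r / r ^ p * ∑ j ∈ Finset.range (2 ^ k),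
      |x ((2 * j + 1) / 2 ^ (k + 1)) - x (j / 2 ^ k)| ^ p) := by
  have hS : ∀ j ∈ Finset.range (2 ^ k),
      0 ≤ |x ((2 * j + 1) / 2 ^ (k + 1)) - x (j / 2 ^ k)| ^ p := fun j _ => by positivity
  rw [pow_succ] at hi
  rcases Nat.even_or_odd' i with ⟨j, rfl | rfl⟩
  · have e : ((2 * j : ℕ) : ℝ) / 2 ^ (k + 1) = j / 2 ^ k := by
      push_cast; field_simp; ring
    rw [e]
    have h1 := hU j (by omega)
    have : 0 ≤ r + r / r ^ p * ∑ j ∈ Finset.range (2 ^ k),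
      |x ((2 * j + 1) / 2 ^ (k + 1)) - x (j / 2 ^ k)| ^ p :=
      add_nonneg hr.le (mul_nonneg (by positivity) (Finset.sum_nonneg hS))
    linarith
  · have hj : j < 2 ^ k := by omega
    have h1 := hU j hj.le
    push_cast
    have h2 := le_add_mul_div_pow (abs_nonneg (x ((2 * j + 1) / 2 ^ (k + 1)) - x (j / 2 ^ k))) hr hp
    have h3 := mul_le_mul_of_nonneg_left
      (Finset.single_le_sum hS (Finset.mem_range.2 hj)) (by positivity : 0 ≤ r / r ^ p)
    have h4 := abs_sub_abs_le_abs_sub (x ((2 * j + 1) / 2 ^ (k + 1))) (x (j / 2 ^ k))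
    linarith

end Grid

section FractionalBrownianMotion

variable {Ω : Type} [MeasurableSpace Ω] {μ : Measure Ω} {H : ℝ}
  {B : ℝ → Ω → ℝ}

lemma IsFBM.integral_sub_sq (hB : IsFBM μ H B) (hH : 0 < H) {s t : ℝ} (hs : 0 ≤ s) (ht : 0 ≤ t) :
    ∫ ω, (B s ω - B t ω) ^ 2 ∂μ = |s - t| ^ (2 * H) := by
  have hm : ∀ t, 0 ≤ t → MemLp (B t) 2 μ := fun t ht => hB.1.memLp ht 2
  have hi : ∀ s t, 0 ≤ s → 0 ≤ t → Integrable (fun ω => B s ω * B t ω) μ := fun s t hs ht =>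
    (hm s hs).integrable_mul (hm t ht)
  have hz : (0 : ℝ) ^ (2 * H) = 0 := zero_rpow (by positivity)
  have e : ∀ ω, (B s ω - B t ω) ^ 2 = B s ω * B s ω - 2 * (B s ω * B t ω) + B t ω * B t ω :=
    fun ω => by ring
  have h1 : Integrable (fun ω => 2 * (B s ω * B t ω)) μ := (hi s t hs ht).const_mul 2
  have h2 : Integrable (fun ω => B s ω * B s ω - 2 * (B s ω * B t ω)) μ := (hi s s hs hs).sub h1
  simp_rw [e]
  rw [integral_add h2 (hi t t ht ht), integral_sub (hi s s hs hs) h1, integral_const_mul,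
    hB.2.2.2 s s hs hs, hB.2.2.2 s t hs ht, hB.2.2.2 t t ht ht, sub_self, sub_self, abs_zero, hz,
    abs_sub_comm s t]
  ring

lemma IsFBM.map_sub_eq (hB : IsFBM μ H B) (hH : 0 < H) {s t : ℝ} (hs : 0 ≤ s) (ht : 0 ≤ t) :
    μ.map (fun ω => B s ω - B t ω) = (gaussianReal 0 1).map (fun x => |s - t| ^ H * x) := by
  obtain ⟨v, hv⟩ := hB.1.map_sub_eq hs ht
  have hmeas : Measurable fun ω => B s ω - B t ω := (hB.1.1 s hs).sub (hB.1.1 t ht)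
  have hvar : (v : ℝ) = |s - t| ^ (2 * H) := by
    rw [← hB.integral_sub_sq hH hs ht, ← variance_fun_id_gaussianReal (μ := 0) (v := v),
      variance_of_integral_eq_zero (by fun_prop) integral_id_gaussianReal, ← hv,
      integral_map hmeas.aemeasurable (by fun_prop)]
  rw [hv, gaussianReal_map_const_mul, mul_zero]
  congr 1
  ext
  rw [hvar, mul_comm 2 H, rpow_mul (abs_nonneg _)]
  simp

lemma IsFBM.integrable_abs_sub_pow [IsProbabilityMeasure μ]
    (hB : IsFBM μ H B) {s t : ℝ} (hs : 0 ≤ s)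
    (ht : 0 ≤ t) (p : ℕ) : Integrable (fun ω => |B s ω - B t ω| ^ p) μ :=
  (((hB.1.memLp hs p).sub (hB.1.memLp ht p)).integrable_norm_pow' :)

lemma IsFBM.integral_abs_sub_pow (hB : IsFBM μ H B) (hH : 0 < H) {s t : ℝ} (hs : 0 ≤ s)
    (ht : 0 ≤ t) (p : ℕ) :
    ∫ ω, |B s ω - B t ω| ^ p ∂μ = (|s - t| ^ H) ^ p * ∫ x, |x| ^ p ∂(gaussianReal 0 1) := by
  have hmeas : Measurable fun ω => B s ω - B t ω := (hB.1.1 s hs).sub (hB.1.1 t ht)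
  rw [← integral_map (f := fun x => |x| ^ p) hmeas.aemeasurable (by fun_prop),
    hB.map_sub_eq hH hs ht, integral_map (by fun_prop) (by fun_prop), ← integral_const_mul]
  simp_rw [abs_mul, mul_pow, abs_of_nonneg (rpow_nonneg (abs_nonneg (s - t)) H)]

lemma IsFBM.exists_integrable_dyadic_bound [IsProbabilityMeasure μ]
    (hB : IsFBM μ H B) (hH : 0 < H) :
    ∃ C : ℝ, ∀ k : ℕ, ∃ U : Ω → ℝ, Integrable U μ ∧
      (∀ ω, ∀ i ≤ 2 ^ k, |B ((i : ℕ) / 2 ^ k) ω| ≤ U ω) ∧ ∫ ω, U ω ∂μ ≤ C := by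
  obtain ⟨p, hp⟩ := exists_nat_ge (1 / (H / 2))
  have hp1 : 1 ≤ H / 2 * p := by
    rw [div_le_iff₀ (by positivity)] at hp
    linarith
  have hp0 : p ≠ 0 := by
    rintro rfl
    norm_num at hp1
  set ρ : ℝ := (1 / 2 : ℝ) ^ (H / 2) with hρ
  have hρ0 : 0 < ρ := by positivity
  have hρ1 : ρ < 1 := rpow_lt_one (by norm_num) (by norm_num) (by positivity)
  have hρp : ρ ^ p ≤ 1 / 2 := by
    rw [hρ, ← rpow_natCast, ← rpow_mul (by norm_num)]
    calc (1 / 2 : ℝ) ^ (H / 2 * p) ≤ (1 / 2 : ℝ) ^ (1 : ℝ) :=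
          rpow_le_rpow_of_exponent_ge (by norm_num) (by norm_num) hp1
      _ = 1 / 2 := rpow_one _
  set c : ℝ := ∫ x, |x| ^ p ∂(gaussianReal 0 1) with hc
  have hc0 : 0 ≤ c := integral_nonneg fun x => by positivity
  set C₀ : ℝ := ∫ ω, (|B 0 ω| + |B 1 ω|) ∂μ
  have main : ∀ k : ℕ, ∃ U : Ω → ℝ, Integrable U μ ∧
      (∀ ω, ∀ i ≤ 2 ^ k, |B ((i : ℕ) / 2 ^ k) ω| ≤ U ω) ∧
      ∫ ω, U ω ∂μ ≤ C₀ + (1 + c) * ∑ j ∈ Finset.range k, ρ ^ (j + 1) := by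
    intro k
    induction k with
    | zero =>
      have hi : ∀ t, 0 ≤ t → Integrable (fun ω => |B t ω|) μ := fun t ht =>
        ((hB.1.memLp ht 1).integrable le_rfl).abs
      refine ⟨fun ω => |B 0 ω| + |B 1 ω|, (hi 0 le_rfl).add (hi 1 zero_le_one), fun ω i hi => ?_,
        by simp [C₀]⟩
      rw [pow_zero] at hi
      interval_cases i <;> simp
    | succ k ih =>
      obtain ⟨U, hUi, hU, hUC⟩ := ih
      set r : ℝ := ρ ^ (k + 1) with hr
      have hr0 : 0 < r := by positivity
      have hintg : ∀ j : ℕ, Integrable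
          (fun ω => |B ((2 * j + 1) / 2 ^ (k + 1)) ω - B (j / 2 ^ k) ω| ^ p) μ := fun j =>
        hB.integrable_abs_sub_pow (by positivity) (by positivity) p
      have hval : ∀ j : ℕ,
          ∫ ω, |B ((2 * j + 1) / 2 ^ (k + 1)) ω - B (j / 2 ^ k) ω| ^ p ∂μ =
            r ^ p * r ^ p * c := fun j => by
        rw [hB.integral_abs_sub_pow hH (by positivity) (by positivity)]
        congr 1
        have e1 : ((2 * j + 1) / 2 ^ (k + 1) - j / 2 ^ k : ℝ) = (1 / 2) ^ (k + 1) := by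
          rw [one_div_pow]
          field_simp
          ring
        have e2 : (((1 / 2 : ℝ) ^ (k + 1)) ^ H) = r * r := by
          rw [hr, ← mul_pow, hρ, ← rpow_add (by norm_num), add_halves, ← rpow_natCast,
            ← rpow_natCast, ← rpow_mul (by norm_num), ← rpow_mul (by norm_num), mul_comm]
        rw [e1, abs_of_nonneg (by positivity), e2, mul_pow]
      have hsum : Integrable (fun ω => r / r ^ p * ∑ j ∈ Finset.range (2 ^ k),
          |B ((2 * j + 1) / 2 ^ (k + 1)) ω - B (j / 2 ^ k) ω| ^ p) μ :=
        (integrable_finsetSum _ fun j _ => hintg j).const_mul _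
      have hinc : Integrable (fun ω => r + r / r ^ p * ∑ j ∈ Finset.range (2 ^ k),
          |B ((2 * j + 1) / 2 ^ (k + 1)) ω - B (j / 2 ^ k) ω| ^ p) μ :=
        (integrable_const r).add hsum
      refine ⟨fun ω => U ω + (r + r / r ^ p * ∑ j ∈ Finset.range (2 ^ k),
        |B ((2 * j + 1) / 2 ^ (k + 1)) ω - B (j / 2 ^ k) ω| ^ p), hUi.add hinc,
        fun ω i hi => abs_dyadic_succ_le (x := fun t => B t ω) hr0 hp0 (hU ω) hi, ?_⟩
      rw [integral_add hUi hinc, integral_add (integrable_const r) hsum, integral_const_mul,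
        integral_finsetSum _ fun j _ => hintg j]
      simp_rw [hval]
      have hrp : 2 ^ k * r ^ p ≤ 1 := by
        have : r ^ p ≤ (1 / 2) ^ (k + 1) := by
          rw [hr, ← pow_mul, mul_comm, pow_mul]
          gcongr
        calc (2 : ℝ) ^ k * r ^ p ≤ 2 ^ k * (1 / 2) ^ (k + 1) := by gcongr
          _ = 1 / 2 := by rw [one_div_pow]; field_simp; ring
          _ ≤ 1 := by norm_num
      have e : r / r ^ p * ∑ _j ∈ Finset.range (2 ^ k), r ^ p * r ^ p * c =
          c * r * (2 ^ k * r ^ p) := by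
        simp only [Finset.sum_const, Finset.card_range, nsmul_eq_mul]
        push_cast
        field_simp
      have h := mul_le_mul_of_nonneg_left hrp (mul_nonneg hc0 hr0.le)
      rw [e, Finset.sum_range_succ]
      simp only [integral_const, probReal_univ, smul_eq_mul, one_mul]
      linarith
  refine ⟨C₀ + (1 + c) * (1 / (1 - ρ)), fun k => ?_⟩
  obtain ⟨U, h1, h2, h3⟩ := main k
  refine ⟨U, h1, h2, h3.trans ?_⟩
  have hgeom : ∑ j ∈ Finset.range k, ρ ^ (j + 1) ≤ 1 / (1 - ρ) := by
    calc ∑ j ∈ Finset.range k, ρ ^ (j + 1) ≤ ∑ j ∈ Finset.range k, ρ ^ j :=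
          Finset.sum_le_sum fun j _ => pow_le_pow_of_le_one hρ0.le hρ1.le (Nat.le_succ j)
      _ ≤ ∑' j, ρ ^ j := (summable_geometric_of_lt_one hρ0.le hρ1).sum_le_tsum _
          fun j _ => by positivity
      _ = 1 / (1 - ρ) := by rw [tsum_geometric_of_lt_one hρ0.le hρ1, one_div]
  gcongr

lemma IsFBM.measurable_iSup_gridPoint (hB : IsFBM μ H B) (n : ℕ) :
    Measurable fun ω => ⨆ i, B (gridPoint n i) ω :=
  Measurable.iSup fun i => hB.1.1 _ (gridPoint_nonneg n i)

lemma IsFBM.integrable_iSup_gridPoint (hB : IsFBM μ H B) (n : ℕ) :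
    Integrable (fun ω => ⨆ i, B (gridPoint n i) ω) μ := by
  have := hB.1.isGaussian_finiteLaw (ts := gridPoint n) (gridPoint_nonneg n)
  have h := integrable_iSup_eval (finiteLaw μ B (gridPoint n))
  exact (integrable_map_measure measurable_iSup_eval.aestronglyMeasurable
    (hB.1.measurable_vector (gridPoint_nonneg n)).aemeasurable).1 h

lemma IsFBM.expMaxGrid_eq (hB : IsFBM μ H B) (n : ℕ) :
    expMaxGrid μ B n = ∫ x, ⨆ i, x i ∂(finiteLaw μ B (gridPoint n)) := by
  rw [finiteLaw, integral_map (hB.1.measurable_vector (gridPoint_nonneg n)).aemeasurable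
    measurable_iSup_eval.aestronglyMeasurable]
  rfl

lemma IsFBM.iSup_gridPoint_nonneg (hB : IsFBM μ H B) (n : ℕ) :
    ∀ᵐ ω ∂μ, 0 ≤ ⨆ i, B (gridPoint n i) ω := by
  filter_upwards [hB.2.2.1] with ω hω
  have := le_ciSup (Finite.bddAbove_range fun i => B (gridPoint n i) ω) 0
  simpa [gridPoint, hω] using this

lemma IsFBM.iSup_nonneg (hB : IsFBM μ H B) :
    ∀ᵐ ω ∂μ, 0 ≤ ⨆ t : Icc (0 : ℝ) 1, B t ω := by
  filter_upwards [hB.2.1, hB.iSup_gridPoint_nonneg 1] with ω hω h0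
  exact h0.trans (iSup_gridPoint_le_iSup hω 1)

lemma IsFBM.aestronglyMeasurable_iSup (hB : IsFBM μ H B) :
    AEStronglyMeasurable (fun ω => ⨆ t : Icc (0 : ℝ) 1, B t ω) μ :=
  (aemeasurable_of_tendsto_metrizable_ae atTop
    (fun k : ℕ => (hB.measurable_iSup_gridPoint (2 ^ k)).aemeasurable)
    (hB.2.1.mono fun _ hω => tendsto_iSup_gridPoint hω)).aestronglyMeasurable

/-- Fatou's lemma along dyadic grids. -/
lemma IsFBM.lintegral_iSup_le (hB : IsFBM μ H B) {C : ℝ}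
    (hC : ∀ k : ℕ, expMaxGrid μ B (2 ^ k) ≤ C) :
    ∫⁻ ω, ENNReal.ofReal (⨆ t : Icc (0 : ℝ) 1, B t ω) ∂μ ≤ ENNReal.ofReal C := by
  calc ∫⁻ ω, ENNReal.ofReal (⨆ t : Icc (0 : ℝ) 1, B t ω) ∂μ
      = ∫⁻ ω, liminf (fun k : ℕ => ENNReal.ofReal (⨆ i, B (gridPoint (2 ^ k) i) ω)) atTop ∂μ := by
        refine lintegral_congr_ae (hB.2.1.mono fun ω hω => ?_)
        exact ((ENNReal.continuous_ofReal.tendsto _).comp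
          (tendsto_iSup_gridPoint hω)).liminf_eq.symm
    _ ≤ liminf (fun k : ℕ => ∫⁻ ω, ENNReal.ofReal (⨆ i, B (gridPoint (2 ^ k) i) ω) ∂μ) atTop :=
        lintegral_liminf_le fun k => (hB.measurable_iSup_gridPoint (2 ^ k)).ennreal_ofReal
    _ ≤ liminf (fun _ : ℕ => ENNReal.ofReal C) atTop := by
        refine liminf_le_liminf (Eventually.of_forall fun k => ?_)
        rw [← ofReal_integral_eq_lintegral_ofReal (hB.integrable_iSup_gridPoint _)
          (hB.iSup_gridPoint_nonneg _)]
        exact ENNReal.ofReal_le_ofReal (hC k)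
    _ = ENNReal.ofReal C := liminf_const _

lemma IsFBM.expMaxGrid_nonneg (hB : IsFBM μ H B) (n : ℕ) : 0 ≤ expMaxGrid μ B n :=
  integral_nonneg_of_ae (hB.iSup_gridPoint_nonneg n)

lemma IsFBM.expMax_le_of_forall_expMaxGrid_le (hB : IsFBM μ H B) {C : ℝ}
    (hC : ∀ k : ℕ, expMaxGrid μ B (2 ^ k) ≤ C) : expMax μ B ≤ C := by
  rw [expMax, integral_eq_lintegral_of_nonneg_ae hB.iSup_nonneg hB.aestronglyMeasurable_iSup]
  exact ENNReal.toReal_le_of_le_ofReal ((hB.expMaxGrid_nonneg _).trans (hC 0))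
    (hB.lintegral_iSup_le hC)

lemma IsFBM.integrable_iSup [IsProbabilityMeasure μ]
    (hB : IsFBM μ H B) (hH : 0 < H) :
    Integrable (fun ω => ⨆ t : Icc (0 : ℝ) 1, B t ω) μ := by
  obtain ⟨C, hC⟩ := hB.exists_integrable_dyadic_bound hH
  refine ⟨hB.aestronglyMeasurable_iSup, ?_⟩
  rw [hasFiniteIntegral_iff_ofReal hB.iSup_nonneg]
  refine (hB.lintegral_iSup_le (C := C) fun k => ?_).trans_lt ENNReal.ofReal_lt_top
  obtain ⟨U, hUi, hU, hUC⟩ := hC k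
  refine (integral_mono (hB.integrable_iSup_gridPoint (2 ^ k)) hUi fun ω => ?_).trans hUC
  refine ciSup_le fun i => (le_abs_self _).trans ?_
  have := hU ω i (Nat.lt_succ_iff.1 i.2)
  simpa [gridPoint] using this

lemma IsFBM.expMaxGrid_le_expMax [IsProbabilityMeasure μ]
    (hB : IsFBM μ H B) (hH : 0 < H) (n : ℕ) :
    expMaxGrid μ B n ≤ expMax μ B :=
  integral_mono_ae (hB.integrable_iSup_gridPoint n) (hB.integrable_iSup hH)
    (hB.2.1.mono fun _ hω => iSup_gridPoint_le_iSup hω n)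

lemma IsFBM.integral_finiteLaw_sub_sq (hB : IsFBM μ H B) (hH : 0 < H) (n : ℕ)
    (i j : Fin (n + 1)) :
    ∫ y, (y i - y j) ^ 2 ∂(finiteLaw μ B (gridPoint n)) =
      |gridPoint n i - gridPoint n j| ^ (2 * H) := by
  rw [finiteLaw, integral_map (hB.1.measurable_vector (gridPoint_nonneg n)).aemeasurable
    (by fun_prop)]
  exact hB.integral_sub_sq hH (gridPoint_nonneg n i) (gridPoint_nonneg n j)

/-- The expected maximum of fractional Brownian motion over a grid is non-increasing in the Hurst
parameter. -/
lemma IsFBM.expMaxGrid_anti {Ω' : Type} [MeasurableSpace Ω'] {μ' : Measure Ω'}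
    [IsProbabilityMeasure μ'] {H' : ℝ} {B' : ℝ → Ω' → ℝ} (hB : IsFBM μ H B)
    (hB' : IsFBM μ' H' B') (hH : 0 < H) (hHH' : H ≤ H') (n : ℕ) :
    expMaxGrid μ' B' n ≤ expMaxGrid μ B n := by
  have := hB.1.isGaussian_finiteLaw (ts := gridPoint n) (gridPoint_nonneg n)
  have := hB'.1.isGaussian_finiteLaw (ts := gridPoint n) (gridPoint_nonneg n)
  rw [hB.expMaxGrid_eq, hB'.expMaxGrid_eq]
  refine integral_iSup_le_of_integral_sub_sq_le (hB'.1.integral_finiteLaw (gridPoint_nonneg n))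
    (hB.1.integral_finiteLaw (gridPoint_nonneg n)) fun i j => ?_
  rw [hB.integral_finiteLaw_sub_sq hH, hB'.integral_finiteLaw_sub_sq (hH.trans_le hHH')]
  refine rpow_le_rpow_of_exponent_ge' (abs_nonneg _) ?_ (by positivity) (by linarith)
  have h := And.intro (gridPoint_nonneg n i) (gridPoint_le_one n i)
  have h' := And.intro (gridPoint_nonneg n j) (gridPoint_le_one n j)
  rw [abs_le]
  constructor <;> linarith [h.1, h.2, h'.1, h'.2]

end FractionalBrownianMotion

/-- `H ↦ f(H)` and `H ↦ f(H,n)` are non-increasing on `(0,1)`: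
if `0 < H₁ ≤ H₂ < 1` then `f(H₂) ≤ f(H₁)` and `f(H₂,n) ≤ f(H₁,n)` for every `n ≥ 1`. -/
theorem stmt13 {Ω₁ : Type} [MeasurableSpace Ω₁] (μ₁ : Measure Ω₁) [IsProbabilityMeasure μ₁]
    {Ω₂ : Type} [MeasurableSpace Ω₂] (μ₂ : Measure Ω₂) [IsProbabilityMeasure μ₂]
    (H₁ H₂ : ℝ) (h0 : 0 < H₁) (h12 : H₁ ≤ H₂) (h1 : H₂ < 1)
    (B₁ : ℝ → Ω₁ → ℝ) (hB₁ : IsFBM μ₁ H₁ B₁)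
    (B₂ : ℝ → Ω₂ → ℝ) (hB₂ : IsFBM μ₂ H₂ B₂) :
    expMax μ₂ B₂ ≤ expMax μ₁ B₁ ∧
      ∀ n : ℕ, 1 ≤ n → expMaxGrid μ₂ B₂ n ≤ expMaxGrid μ₁ B₁ n := by
  have hgrid := hB₁.expMaxGrid_anti hB₂ h0 h12
  exact ⟨hB₂.expMax_le_of_forall_expMaxGrid_le fun k =>
    (hgrid (2 ^ k)).trans (hB₁.expMaxGrid_le_expMax h0 (2 ^ k)), fun n _ => hgrid n⟩
end
end
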